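/- Let y_1, y_2, y_3 ∈ ℝ² be non-collinear, T their closed convex hull, r ∈ [1,∞), and let X_1, X_2 be i.i.d. uniform on T. Then the edge probability of the reflexivity graph, p_and(r) := P(X_2 ∈ N_PE^r(X_1) and X_1 ∈ N_PE^r(X_2)), is given by: p_and(r) = (1−r)(5r⁵ − 148r⁴ + 245r³ − 178r² − 232r + 128)/(54 r² (r+2)(r+1)) for r ∈ [1, 4/3); p_and(r) = −(101r⁵ − 801r⁴ + 1302r³ − 732r² − 536r + 672)/(216 r (r+2)(r+1)) for r ∈ [4/3, 3/2); p_and(r) = (r⁸ − 13r⁷ + 30r⁶ + 148r⁵ − 448r⁴ + 264r³ + 288r² − 368r + 96)/(8 r⁴ (r+2)(r+1)) for r ∈ [3/2, 2); and p_and(r) = (r³ + 3r² + 2r − 2)(r − 1)²/(r⁴ (r+1)) for r ∈ [2, ∞). -/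

import Mathlib

/-!
In barycentric coordinates everything becomes independent of the triangle. Fix a vertex `i` and a
second vertex `j`, and record a point by `(s, b) = (1 - bᵢ, bⱼ)`. This is an invertible affine map
which carries the uniform distribution on `T` to the uniform distribution on the reference triangle
`0 ≤ b ≤ s ≤ 1` (`map_coord_unif`), and up to null sets the vertex region of `i` is the set where
`bᵢ` is strictly the largest coordinate (`vtx_of_mem_cell`, `ae_mem_cell`), i.e. where
`max 0 (2s - 1) < b < min s (1 - s)`; the length of this interval is `wid s = min s (2 - 3s)`.

The edge event splits into nine disjoint events according to the vertex regions of the two points.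

* If both points belong to the same vertex, their heights `s, t` have to satisfy `t ≤ r s` and
  `s ≤ r t`, which has probability `4 (highTail r - lowTail r)` (`refUnif_sameEvent`).
* If they belong to different vertices `i ≠ j`, write the first point as `(s, b)` with respect to
  `(i, j)` and the second one as `(t, c)` with respect to `(j, i)`. The conditions are `1 - c ≤ r s`
  and `1 - b ≤ r t`; for given `s, t` they are conditions on `c` and `b` separately. The condition
  on `b` removes a piece of length `cut r s t` from the interval of length `wid s`, so that the
  probability is `4 ∫∫ (wid s - cut r s t) (wid t - cut r t s)`, and expanding the product gives
  `4 (1/36 - 2 oneFail r + bothFail r)` (`refUnif_diffEvent`).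

There are three pairs of the first kind and six of the second, whence
`p_and(r) = 12 (highTail - lowTail) + 24 (1/36 - 2 oneFail + bothFail)` (`pand_eq_pandInt`). All four
quantities are integrals of piecewise polynomials of degree at most three, whose breakpoints change
their order at `r = 4/3, 3/2, 2`; evaluating them gives the formula (`pandInt_formula`).
-/

open MeasureTheory ProbabilityTheory Filter Topology
open scoped Classical

noncomputable section

/-- The planar cross product / determinant of two vectors in `ℝ²`. -/
def det2 (u v : ℝ × ℝ) : ℝ := u.1 * v.2 - u.2 * v.1

/-- The triangle (closed convex hull) spanned by three points of `ℝ²`. -/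
def triangle (y : Fin 3 → ℝ × ℝ) : Set (ℝ × ℝ) := convexHull ℝ {y 0, y 1, y 2}

/-- The barycentric coordinate with respect to the vertex `y i` of the triangle with
vertices `y 0, y 1, y 2` (so `bary y i (y i) = 1` and `bary y i` vanishes on the edge
opposite `y i`). -/
def bary (y : Fin 3 → ℝ × ℝ) (i : Fin 3) (z : ℝ × ℝ) : ℝ :=
  det2 (z - y (i + 1)) (y (i + 2) - y (i + 1)) /
    det2 (y i - y (i + 1)) (y (i + 2) - y (i + 1))

/-- The vertex region `R(y i)`: the convex hull of `y i`, the midpoints of the two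
edges incident to `y i`, and the center of mass of the triangle. -/
def vertexRegion (y : Fin 3 → ℝ × ℝ) (i : Fin 3) : Set (ℝ × ℝ) :=
  convexHull ℝ {y i, midpoint ℝ (y i) (y (i + 1)), midpoint ℝ (y i) (y (i + 2)),
    (3 : ℝ)⁻¹ • (y 0 + y 1 + y 2)}

/-- The vertex of smallest index whose vertex region contains `x`. -/
def vtx (y : Fin 3 → ℝ × ℝ) (x : ℝ × ℝ) : Fin 3 :=
  if x ∈ vertexRegion y 0 then 0 else if x ∈ vertexRegion y 1 then 1 else 2

/-- The proportional-edge proximity region `N_PE^r(x)` in the triangle with vertices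
`y 0, y 1, y 2`:  `{z ∈ T : 1 − b_{v(x)}(z) ≤ r (1 − b_{v(x)}(x))}` for non-vertex `x`,
and `{x}` for a vertex `x`. -/
def NPE (y : Fin 3 → ℝ × ℝ) (r : ℝ) (x : ℝ × ℝ) : Set (ℝ × ℝ) :=
  if x = y 0 ∨ x = y 1 ∨ x = y 2 then {x}
  else {z ∈ triangle y | 1 - bary y (vtx y x) z ≤ r * (1 - bary y (vtx y x) x)}

/-- The uniform distribution on the triangle with vertices `y 0, y 1, y 2`. -/
def unif (y : Fin 3 → ℝ × ℝ) : Measure (ℝ × ℝ) :=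
  (volume (triangle y))⁻¹ • volume.restrict (triangle y)

/-! ### Integration tools -/

lemma integral_cubic {f : ℝ → ℝ} {p q : ℝ} (hpq : p ≤ q) (c₀ c₁ c₂ c₃ : ℝ)
    (h : ∀ t, p ≤ t → t ≤ q → f t = c₀ + c₁ * t + c₂ * t ^ 2 + c₃ * t ^ 3) :
    ∫ t in p..q, f t = c₀ * (q - p) + c₁ * ((q ^ 2 - p ^ 2) / 2) +
      c₂ * ((q ^ 3 - p ^ 3) / 3) + c₃ * ((q ^ 4 - p ^ 4) / 4) := by
  have h1 : ∫ t in p..q, f t = ∫ t in p..q, (c₀ + c₁ * t + c₂ * t ^ 2 + c₃ * t ^ 3) := by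
    apply intervalIntegral.integral_congr
    intro t ht
    rw [Set.uIcc_of_le hpq] at ht
    exact h t ht.1 ht.2
  rw [h1, intervalIntegral.integral_eq_sub_of_hasDerivAt
    (f := fun t => c₀ * t + c₁ * (t ^ 2 / 2) + c₂ * (t ^ 3 / 3) + c₃ * (t ^ 4 / 4))]
  · ring
  · intro t _
    have e1 := (hasDerivAt_id t).const_mul c₀
    have e2 := ((hasDerivAt_pow 2 t).div_const 2).const_mul c₁
    have e3 := ((hasDerivAt_pow 3 t).div_const 3).const_mul c₂
    have e4 := ((hasDerivAt_pow 4 t).div_const 4).const_mul c₃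
    exact (((e1.add e2).add e3).add e4).congr_deriv (by push_cast; ring)
  · apply Continuous.intervalIntegrable
    fun_prop

lemma integral_split {f : ℝ → ℝ} (hf : Continuous f) (p m q : ℝ) :
    ∫ t in p..q, f t = (∫ t in p..m, f t) + ∫ t in m..q, f t :=
  (intervalIntegral.integral_add_adjacent_intervals (hf.intervalIntegrable _ _)
    (hf.intervalIntegrable _ _)).symm

/-- Fubini on a triangle: a symmetric integrand over a square contributes equally on both sides
of the diagonal. -/
lemma integral_square_symm {f : ℝ → ℝ → ℝ} (hf : Continuous (Function.uncurry f))
    (hs : ∀ s t, f s t = f t s) {b : ℝ} (hb : 0 ≤ b) :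
    ∫ s in (0 : ℝ)..b, ∫ t in (0 : ℝ)..b, f s t = 2 * ∫ s in (0 : ℝ)..b, ∫ t in (0 : ℝ)..s, f s t := by
  have hlow : Continuous fun s => ∫ t in (0 : ℝ)..s, f s t := by fun_prop
  have hfull : Continuous fun s => ∫ t in (0 : ℝ)..b, f s t := by fun_prop
  have hup : Continuous fun s => ∫ t in s..b, f s t := by
    have : (fun s => ∫ t in s..b, f s t) =
        fun s => (∫ t in (0 : ℝ)..b, f s t) - ∫ t in (0 : ℝ)..s, f s t := by
      funext s
      rw [integral_split (f := f s) (by fun_prop) 0 s b]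
      ring
    rw [this]
    exact hfull.sub hlow
  have key : ∫ s in (0 : ℝ)..b, ∫ t in s..b, f s t = ∫ s in (0 : ℝ)..b, ∫ t in (0 : ℝ)..s, f s t := by
    set μ : Measure ℝ := volume.restrict (Set.Ioc 0 b) with hμ
    have e1 : ∫ s in (0 : ℝ)..b, ∫ t in s..b, f s t
        = ∫ s, ∫ t, (Set.Ioi s).indicator (f s) t ∂μ ∂μ := by
      rw [intervalIntegral.integral_of_le hb]
      refine setIntegral_congr_fun measurableSet_Ioc fun s hs => ?_
      rw [intervalIntegral.integral_of_le hs.2, integral_indicator measurableSet_Ioi, hμ,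
        Measure.restrict_restrict measurableSet_Ioi]
      congr 2
      ext t
      simp only [Set.mem_Ioc, Set.mem_inter_iff, Set.mem_Ioi]
      constructor
      · rintro ⟨h1, h2⟩; exact ⟨h1, hs.1.trans h1, h2⟩
      · rintro ⟨h1, _, h2⟩; exact ⟨h1, h2⟩
    have e2 : ∫ s in (0 : ℝ)..b, ∫ t in (0 : ℝ)..s, f s t
        = ∫ s, ∫ t, (Set.Iio s).indicator (f s) t ∂μ ∂μ := by
      rw [intervalIntegral.integral_of_le hb]
      refine setIntegral_congr_fun measurableSet_Ioc fun s hs => ?_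
      rw [intervalIntegral.integral_of_le hs.1.le, integral_Ioc_eq_integral_Ioo,
        integral_indicator measurableSet_Iio, hμ, Measure.restrict_restrict measurableSet_Iio]
      congr 2
      ext t
      simp only [Set.mem_Ioc, Set.mem_inter_iff, Set.mem_Iio, Set.mem_Ioo]
      constructor
      · rintro ⟨h1, h2⟩; exact ⟨h2, h1, h2.le.trans hs.2⟩
      · rintro ⟨h1, h2, _⟩; exact ⟨h2, h1⟩
    rw [e1, e2, integral_integral_swap]
    · refine integral_congr_ae (Eventually.of_forall fun s => ?_)
      refine integral_congr_ae (Eventually.of_forall fun t => ?_)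
      simp only [Set.indicator, Set.mem_Ioi, Set.mem_Iio, hs t s]
    · have : (Function.uncurry fun s t => (Set.Ioi s).indicator (f s) t)
          = {p : ℝ × ℝ | p.1 < p.2}.indicator (Function.uncurry f) := by
        ext ⟨s, t⟩
        simp [Set.indicator, Function.uncurry]
      rw [this]
      refine Integrable.indicator ?_ (measurableSet_lt measurable_fst measurable_snd)
      rw [hμ, Measure.prod_restrict]
      exact (hf.continuousOn.integrableOn_compact
        ((isCompact_Icc (a := (0 : ℝ)) (b := b)).prod (isCompact_Icc (a := (0 : ℝ)) (b := b)))).mono_set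
        (Set.prod_mono Set.Ioc_subset_Icc_self Set.Ioc_subset_Icc_self)
  have hsplit : ∀ s, ∫ t in (0 : ℝ)..b, f s t = (∫ t in (0 : ℝ)..s, f s t) + ∫ t in s..b, f s t :=
    fun s => integral_split (f := f s) (by fun_prop) 0 s b
  simp_rw [hsplit]
  rw [intervalIntegral.integral_add (hlow.intervalIntegrable _ _) (hup.intervalIntegrable _ _), key]
  ring

lemma integral_swap_of_continuous {f : ℝ → ℝ → ℝ} (hf : Continuous (Function.uncurry f))
    {b : ℝ} (hb : 0 ≤ b) :
    ∫ s in (0 : ℝ)..b, ∫ t in (0 : ℝ)..b, f s t = ∫ t in (0 : ℝ)..b, ∫ s in (0 : ℝ)..b, f s t := by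
  simp only [intervalIntegral.integral_of_le hb]
  apply integral_integral_swap
  rw [Measure.prod_restrict]
  exact (hf.continuousOn.integrableOn_compact
    ((isCompact_Icc (a := (0 : ℝ)) (b := b)).prod (isCompact_Icc (a := (0 : ℝ)) (b := b)))).mono_set
    (Set.prod_mono Set.Ioc_subset_Icc_self Set.Ioc_subset_Icc_self)

/-! ### The width functions -/

/-- The vertex region of a vertex, in the coordinates `s = 1 - (barycentric coordinate of that
vertex)` and `b = ` (another barycentric coordinate), is `max 0 (2s - 1) ≤ b ≤ min s (1 - s)`,
`0 ≤ s ≤ 2/3`; `wid s` is the length of this interval. -/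
def wid (s : ℝ) : ℝ := min s (2 - 3 * s)

/-- The length of the part of the interval `[max 0 (2s - 1), min s (1 - s)]` lying below
`1 - r * t`, for `0 ≤ s ≤ 2/3`. -/
def cut (r s t : ℝ) : ℝ := min (wid s) (max 0 (1 - r * t - max 0 (2 * s - 1)))

@[fun_prop]
lemma continuous_wid : Continuous wid := by unfold wid; fun_prop

@[fun_prop]
lemma continuous_cut (r : ℝ) {X : Type*} [TopologicalSpace X] {f g : X → ℝ} (hf : Continuous f)
    (hg : Continuous g) : Continuous fun x => cut r (f x) (g x) := by
  unfold cut; fun_prop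

lemma wid_lo {s : ℝ} (h : s ≤ 1 / 2) : wid s = s := min_eq_left (by linarith)

lemma wid_hi {s : ℝ} (h : 1 / 2 ≤ s) : wid s = 2 - 3 * s := min_eq_right (by linarith)

lemma cut_lo_full {r s t : ℝ} (h0 : 0 ≤ s) (h1 : s ≤ 1 / 2) (h : s ≤ 1 - r * t) :
    cut r s t = s := by
  rw [cut, wid_lo h1, max_eq_left (a := (0 : ℝ)) (b := 2 * s - 1) (by linarith), max_eq_right (by linarith), min_eq_left (by linarith)]

lemma cut_lo_part {r s t : ℝ} (h1 : s ≤ 1 / 2) (h : 1 - r * t ≤ s) (h' : 0 ≤ 1 - r * t) :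
    cut r s t = 1 - r * t := by
  rw [cut, wid_lo h1, max_eq_left (a := (0 : ℝ)) (b := 2 * s - 1) (by linarith), max_eq_right (by linarith), min_eq_right (by linarith)]
  ring

lemma cut_lo_zero {r s t : ℝ} (h0 : 0 ≤ s) (h1 : s ≤ 1 / 2) (h : 1 - r * t ≤ 0) :
    cut r s t = 0 := by
  rw [cut, wid_lo h1, max_eq_left (a := (0 : ℝ)) (b := 2 * s - 1) (by linarith), max_eq_left (by linarith), min_eq_right h0]

lemma cut_hi_full {r s t : ℝ} (h0 : 1 / 2 ≤ s) (h1 : s ≤ 2 / 3) (h : r * t ≤ s) :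
    cut r s t = 2 - 3 * s := by
  rw [cut, wid_hi h0, max_eq_right (a := (0 : ℝ)) (b := 2 * s - 1) (by linarith), max_eq_right (by linarith), min_eq_left (by linarith)]

lemma cut_hi_part {r s t : ℝ} (h0 : 1 / 2 ≤ s) (h : s ≤ r * t) (h' : r * t ≤ 2 - 2 * s) :
    cut r s t = 2 - 2 * s - r * t := by
  rw [cut, wid_hi h0, max_eq_right (a := (0 : ℝ)) (b := 2 * s - 1) (by linarith), max_eq_right (by linarith), min_eq_right (by linarith)]
  ring

lemma cut_hi_zero {r s t : ℝ} (h0 : 1 / 2 ≤ s) (h1 : s ≤ 2 / 3) (h : 2 - 2 * s ≤ r * t) :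
    cut r s t = 0 := by
  rw [cut, wid_hi h0, max_eq_right (a := (0 : ℝ)) (b := 2 * s - 1) (by linarith), max_eq_left (by linarith), min_eq_right (by linarith)]

lemma integral_wid_lo {u : ℝ} (h0 : 0 ≤ u) (h1 : u ≤ 1 / 2) :
    ∫ s in (0 : ℝ)..u, wid s = u ^ 2 / 2 := by
  rw [integral_cubic h0 0 1 0 0 (fun t _ h => by rw [wid_lo (by linarith)]; ring)]
  ring

lemma integral_wid_hi {u : ℝ} (h0 : 1 / 2 ≤ u) :
    ∫ s in (0 : ℝ)..u, wid s = 1 / 6 - (2 - 3 * u) ^ 2 / 6 := by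
  rw [integral_split continuous_wid 0 (1 / 2) u, integral_wid_lo (by norm_num) le_rfl,
    integral_cubic h0 2 (-3) 0 0 (fun t h _ => by rw [wid_hi h]; ring)]
  ring

lemma integral_wid : ∫ s in (0 : ℝ)..(2 / 3), wid s = 1 / 6 := by
  rw [integral_wid_hi (by norm_num)]; norm_num

/-! ### Both points in the same vertex region -/

/-- `∫ w(t) W(t/r) dt` with `W` the primitive of `wid`: the weight of `r * s < t`. -/
def lowTail (r : ℝ) : ℝ := ∫ t in (0 : ℝ)..(2 / 3), wid t * ∫ s in (0 : ℝ)..(t / r), wid s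

/-- `∫ w(t) W(min (r t) (2/3)) dt` with `W` the primitive of `wid`: the weight of `s ≤ r * t`. -/
def highTail (r : ℝ) : ℝ :=
  ∫ t in (0 : ℝ)..(2 / 3), wid t * ∫ s in (0 : ℝ)..(min (r * t) (2 / 3)), wid s

lemma lowTail_small {r : ℝ} (hr : 1 ≤ r) (h : r < 4 / 3) :
    lowTail r = (-27 * r ^ 4 + 144 * r ^ 3 - 288 * r ^ 2 + 256 * r - 73) / (864 * r ^ 2) := by
  have hr0 : 0 < r := by linarith
  have hc : Continuous fun t : ℝ => wid t * ∫ s in (0 : ℝ)..(t / r), wid s := by fun_prop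
  rw [lowTail, integral_split hc 0 (1 / 2) (2 / 3), integral_split hc (1 / 2) (r / 2) (2 / 3),
    integral_cubic (by norm_num) 0 0 0 (1 / 2 / r ^ 2) ?_,
    integral_cubic (by linarith) 0 0 (1 / r ^ 2) (-3 / 2 / r ^ 2) ?_,
    integral_cubic (by linarith) (-1) (3 / 2 + 4 / r) (-6 / r - 3 / r ^ 2) (9 / 2 / r ^ 2) ?_]
  · field_simp
    ring
  · intro t h0 h1
    have : 1 / 2 ≤ t / r := by rw [le_div_iff₀ hr0]; linarith
    rw [wid_hi (by linarith), integral_wid_hi this]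
    field_simp
    ring
  · intro t h0 h1
    have : t / r ≤ 1 / 2 := by rw [div_le_iff₀ hr0]; linarith
    rw [wid_hi (by linarith), integral_wid_lo (by positivity) this]
    field_simp
    ring
  · intro t h0 h1
    have : t / r ≤ 1 / 2 := by rw [div_le_iff₀ hr0]; linarith
    rw [wid_lo (by linarith), integral_wid_lo (by positivity) this]
    field_simp
    ring

lemma lowTail_large {r : ℝ} (h : 4 / 3 ≤ r) : lowTail r = 37 / (2592 * r ^ 2) := by
  have hr0 : 0 < r := by linarith
  have hc : Continuous fun t : ℝ => wid t * ∫ s in (0 : ℝ)..(t / r), wid s := by fun_prop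
  rw [lowTail, integral_split hc 0 (1 / 2) (2 / 3),
    integral_cubic (by norm_num) 0 0 0 (1 / 2 / r ^ 2) ?_,
    integral_cubic (by norm_num) 0 0 (1 / r ^ 2) (-3 / 2 / r ^ 2) ?_]
  · field_simp
    ring
  · intro t h0 h1
    have : t / r ≤ 1 / 2 := by rw [div_le_iff₀ hr0]; linarith
    rw [wid_hi (by linarith), integral_wid_lo (by positivity) this]
    field_simp
    ring
  · intro t h0 h1
    have : t / r ≤ 1 / 2 := by rw [div_le_iff₀ hr0]; linarith
    rw [wid_lo (by linarith), integral_wid_lo (by positivity) this]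
    field_simp
    ring

lemma primitive_first {r t : ℝ} (hr : 1 ≤ r) (h0 : 0 ≤ t) (h1 : t ≤ 1 / (2 * r)) :
    ∫ s in (0 : ℝ)..(min (r * t) (2 / 3)), wid s = (r * t) ^ 2 / 2 := by
  have hr0 : 0 < r := by linarith
  rw [le_div_iff₀ (by positivity)] at h1
  rw [min_eq_left (by linarith), integral_wid_lo (by positivity) (by linarith)]

lemma primitive_second {r t : ℝ} (hr : 1 ≤ r) (h0 : 1 / (2 * r) ≤ t) (h1 : t ≤ 2 / (3 * r)) :
    ∫ s in (0 : ℝ)..(min (r * t) (2 / 3)), wid s = 1 / 6 - (2 - 3 * (r * t)) ^ 2 / 6 := by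
  have hr0 : 0 < r := by linarith
  rw [le_div_iff₀ (by positivity)] at h1
  rw [div_le_iff₀ (by positivity)] at h0
  rw [min_eq_left (by linarith), integral_wid_hi (by linarith)]

lemma primitive_third {r t : ℝ} (hr : 1 ≤ r) (h0 : 2 / (3 * r) ≤ t) :
    ∫ s in (0 : ℝ)..(min (r * t) (2 / 3)), wid s = 1 / 6 := by
  have hr0 : 0 < r := by linarith
  rw [div_le_iff₀ (by positivity)] at h0
  rw [min_eq_right (by linarith), integral_wid]

lemma highTail_small {r : ℝ} (hr : 1 ≤ r) (h : r < 4 / 3) :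
    highTail r =
      1 / 36 - (-27 * r ^ 4 + 144 * r ^ 3 - 288 * r ^ 2 + 256 * r - 73) / (864 * r ^ 2) := by
  have hr0 : 0 < r := by linarith
  have hc : Continuous fun t : ℝ => wid t * ∫ s in (0 : ℝ)..(min (r * t) (2 / 3)), wid s := by
    fun_prop
  have b1 : 1 / (2 * r) ≤ 1 / 2 := by rw [div_le_iff₀ (by positivity)]; linarith
  have b2 : 1 / 2 ≤ 2 / (3 * r) := by rw [le_div_iff₀ (by positivity)]; linarith
  have b3 : 2 / (3 * r) ≤ 2 / 3 := by rw [div_le_iff₀ (by positivity)]; linarith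
  have b0 : 0 ≤ 1 / (2 * r) := by positivity
  rw [highTail, integral_split hc 0 (1 / (2 * r)) (2 / 3),
    integral_split hc (1 / (2 * r)) (1 / 2) (2 / 3),
    integral_split hc (1 / 2) (2 / (3 * r)) (2 / 3),
    integral_cubic b0 0 0 0 (1 / 2 * r ^ 2) ?_,
    integral_cubic b1 0 (-1 / 2) (2 * r) (-3 / 2 * r ^ 2) ?_,
    integral_cubic b2 (-1) (4 * r + 3 / 2) (-3 * r ^ 2 - 6 * r) (9 / 2 * r ^ 2) ?_,
    integral_cubic b3 (1 / 3) (-1 / 2) 0 0 ?_]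
  · field_simp
    ring
  · intro t h0 h1
    rw [wid_hi (by linarith), primitive_third hr h0]
    ring
  · intro t h0 h1
    rw [wid_hi (by linarith), primitive_second hr (by linarith) h1]
    ring
  · intro t h0 h1
    rw [wid_lo (by linarith), primitive_second hr h0 (by linarith)]
    ring
  · intro t h0 h1
    rw [wid_lo (by linarith), primitive_first hr h0 h1]
    ring

lemma highTail_large {r : ℝ} (h : 4 / 3 ≤ r) : highTail r = 1 / 36 - 37 / (2592 * r ^ 2) := by
  have hr0 : 0 < r := by linarith
  have hr : 1 ≤ r := by linarith
  have hc : Continuous fun t : ℝ => wid t * ∫ s in (0 : ℝ)..(min (r * t) (2 / 3)), wid s := by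
    fun_prop
  have b1 : 1 / (2 * r) ≤ 2 / (3 * r) := by
    rw [div_le_div_iff₀ (by positivity) (by positivity)]; linarith
  have b2 : 2 / (3 * r) ≤ 1 / 2 := by rw [div_le_iff₀ (by positivity)]; linarith
  have b0 : 0 ≤ 1 / (2 * r) := by positivity
  rw [highTail, integral_split hc 0 (1 / (2 * r)) (2 / 3),
    integral_split hc (1 / (2 * r)) (2 / (3 * r)) (2 / 3),
    integral_split hc (2 / (3 * r)) (1 / 2) (2 / 3),
    integral_cubic b0 0 0 0 (1 / 2 * r ^ 2) ?_,
    integral_cubic b1 0 (-1 / 2) (2 * r) (-3 / 2 * r ^ 2) ?_,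
    integral_cubic b2 0 (1 / 6) 0 0 ?_,
    integral_cubic (by norm_num) (1 / 3) (-1 / 2) 0 0 ?_]
  · field_simp
    ring
  · intro t h0 h1
    rw [wid_hi (by linarith), primitive_third hr (by linarith)]
    ring
  · intro t h0 h1
    rw [wid_lo (by linarith), primitive_third hr (by linarith)]
    ring
  · intro t h0 h1
    rw [wid_lo (by linarith), primitive_second hr h0 h1]
    ring
  · intro t h0 h1
    rw [wid_lo (by linarith), primitive_first hr h0 h1]
    ring

/-! ### Points in different vertex regions: one failing condition -/

/-- Area of the part of the vertex region below `b = c`, where `c = 1 - r * t ≥ 1/2`. -/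
lemma integral_cut_full {r t : ℝ} (h : 1 / 2 ≤ 1 - r * t) :
    ∫ s in (0 : ℝ)..(2 / 3), cut r s t = 1 / 6 := by
  have hc : Continuous fun s : ℝ => cut r s t := by fun_prop
  rw [integral_split hc 0 (1 / 2) (2 / 3), integral_cubic (by norm_num) 0 1 0 0 ?_,
    integral_cubic (by norm_num) 2 (-3) 0 0 ?_]
  · norm_num
  · intro s h0 h1
    rw [cut_hi_full h0 h1 (by linarith)]
    ring
  · intro s h0 h1
    rw [cut_lo_full h0 h1 (by linarith)]
    ring

lemma integral_cut_mid {r t : ℝ} (h : 1 / 3 ≤ 1 - r * t) (h' : 1 - r * t ≤ 1 / 2) :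
    ∫ s in (0 : ℝ)..(2 / 3), cut r s t = 1 / 6 - (1 / 2 - (1 - r * t)) ^ 2 := by
  have hc : Continuous fun s : ℝ => cut r s t := by fun_prop
  rw [integral_split hc 0 (1 - r * t) (2 / 3), integral_split hc (1 - r * t) (1 / 2) (2 / 3),
    integral_split hc (1 / 2) (r * t) (2 / 3),
    integral_cubic (by linarith) 0 1 0 0 ?_,
    integral_cubic h' (1 - r * t) 0 0 0 ?_,
    integral_cubic (by linarith) (2 - r * t) (-2) 0 0 ?_,
    integral_cubic (by linarith) 2 (-3) 0 0 ?_]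
  · ring
  · intro s h0 h1
    rw [cut_hi_full (by linarith) h1 h0]
    ring
  · intro s h0 h1
    rw [cut_hi_part h0 h1 (by linarith)]
    ring
  · intro s h0 h1
    rw [cut_lo_part h1 h0 (by linarith)]
    ring
  · intro s h0 h1
    rw [cut_lo_full h0 (by linarith) h1]
    ring

lemma integral_cut_low {r t : ℝ} (h : 0 ≤ 1 - r * t) (h' : 1 - r * t ≤ 1 / 3) :
    ∫ s in (0 : ℝ)..(2 / 3), cut r s t = (1 - r * t) / 2 - (1 - r * t) ^ 2 / 4 := by
  have hc : Continuous fun s : ℝ => cut r s t := by fun_prop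
  rw [integral_split hc 0 (1 - r * t) (2 / 3), integral_split hc (1 - r * t) (1 / 2) (2 / 3),
    integral_split hc (1 / 2) (1 - r * t / 2) (2 / 3),
    integral_cubic h 0 1 0 0 ?_,
    integral_cubic (by linarith) (1 - r * t) 0 0 0 ?_,
    integral_cubic (by linarith) (2 - r * t) (-2) 0 0 ?_,
    integral_cubic (by linarith) 0 0 0 0 ?_]
  · ring
  · intro s h0 h1
    rw [cut_hi_zero (by linarith) h1 (by linarith)]
    ring
  · intro s h0 h1
    rw [cut_hi_part h0 (by linarith) (by linarith)]
    ring
  · intro s h0 h1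
    rw [cut_lo_part h1 h0 (by linarith)]
    ring
  · intro s h0 h1
    rw [cut_lo_full h0 (by linarith) h1]
    ring

lemma integral_cut_none {r t : ℝ} (h : 1 - r * t ≤ 0) :
    ∫ s in (0 : ℝ)..(2 / 3), cut r s t = 0 := by
  have hc : Continuous fun s : ℝ => cut r s t := by fun_prop
  rw [integral_split hc 0 (1 / 2) (2 / 3), integral_cubic (by norm_num) 0 0 0 0 ?_,
    integral_cubic (by norm_num) 0 0 0 0 ?_]
  · norm_num
  · intro s h0 h1
    rw [cut_hi_zero h0 h1 (by linarith)]
    ring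
  · intro s h0 h1
    rw [cut_lo_zero h0 h1 (by linarith)]
    ring

/-- The weight of the pairs violating a given one of the two conditions. -/
def oneFail (r : ℝ) : ℝ := ∫ t in (0 : ℝ)..(2 / 3), wid t * ∫ s in (0 : ℝ)..(2 / 3), cut r s t

lemma continuous_oneFail (r : ℝ) :
    Continuous fun t : ℝ => wid t * ∫ s in (0 : ℝ)..(2 / 3), cut r s t := by
  refine continuous_wid.mul ?_
  exact intervalIntegral.continuous_parametric_intervalIntegral_of_continuous'
    (f := fun t s => cut r s t) (by unfold Function.uncurry; fun_prop) 0 (2 / 3)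

/-- The contribution of `t ≤ min(1/2, 2/(3r))` to `oneFail r`, common to all `r`. -/
lemma oneFail_one {r : ℝ} (hr : 1 ≤ r) {q : ℝ} (hq : q ≤ 1 / 2) (hq' : q ≤ 2 / (3 * r))
    (hq'' : 1 / (2 * r) ≤ q) :
    ∫ t in (0 : ℝ)..q, wid t * ∫ s in (0 : ℝ)..(2 / 3), cut r s t =
      -1 / 24 * q ^ 2 + r / 3 * q ^ 3 - r ^ 2 / 4 * q ^ 4 + 1 / (192 * r ^ 2) := by
  have hr0 : 0 < r := by linarith
  have hc := continuous_oneFail r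
  have b0 : 0 ≤ 1 / (2 * r) := by positivity
  rw [integral_split hc 0 (1 / (2 * r)) q, integral_cubic b0 0 (1 / 6) 0 0 ?_,
    integral_cubic hq'' 0 (-1 / 12) r (-r ^ 2) ?_]
  · field_simp
    ring
  · intro t h0 h1
    rw [div_le_iff₀ (by positivity)] at h0
    replace hq' := h1.trans hq'
    rw [le_div_iff₀ (by positivity)] at hq'
    rw [wid_lo (by linarith), integral_cut_mid (by linarith) (by linarith)]
    ring
  · intro t h0 h1
    have h2 := h1
    rw [le_div_iff₀ (by positivity)] at h1
    rw [wid_lo (by linarith), integral_cut_full (by linarith)]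
    ring

lemma oneFail_small {r : ℝ} (hr : 1 ≤ r) (h : r < 4 / 3) :
    oneFail r =
      (44 * r ^ 4 - 432 * r ^ 3 + 1080 * r ^ 2 - 768 * r + 219) / (5184 * r ^ 2) := by
  have hr0 : 0 < r := by linarith
  have hc := continuous_oneFail r
  have b1 : 1 / (2 * r) ≤ 1 / 2 := by rw [div_le_iff₀ (by positivity)]; linarith
  have b2 : 1 / 2 ≤ 2 / (3 * r) := by rw [le_div_iff₀ (by positivity)]; linarith
  have b3 : 2 / (3 * r) ≤ 2 / 3 := by rw [div_le_iff₀ (by positivity)]; linarith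
  rw [oneFail, integral_split hc 0 (1 / 2) (2 / 3), integral_split hc (1 / 2) (2 / (3 * r)) (2 / 3),
    oneFail_one hr le_rfl b2 b1,
    integral_cubic b2 (-1 / 6) (2 * r + 1 / 4) (-2 * r ^ 2 - 3 * r) (3 * r ^ 2) ?_,
    integral_cubic b3 (1 / 2) (-3 / 4) (-1 / 2 * r ^ 2) (3 / 4 * r ^ 2) ?_]
  · field_simp
    ring
  · intro t h0 h1
    have h2 := b2.trans h0
    rw [div_le_iff₀ (by positivity)] at h0
    rw [wid_hi h2, integral_cut_low (by nlinarith) (by linarith)]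
    ring
  · intro t h0 h1
    rw [le_div_iff₀ (by positivity)] at h1
    rw [wid_hi h0, integral_cut_mid (by linarith) (by nlinarith)]
    ring

/-- For `r ≥ 4/3` the contribution of `t ≤ 1/2`, or of `t ≤ 1/r` when `r ≥ 2`, to `oneFail r`. -/
lemma oneFail_two {r : ℝ} (h : 4 / 3 ≤ r) {q : ℝ} (hq : q ≤ 1 / 2) (hq' : 2 / (3 * r) ≤ q)
    (hq'' : q ≤ 1 / r) :
    ∫ t in (0 : ℝ)..q, wid t * ∫ s in (0 : ℝ)..(2 / 3), cut r s t =
      q ^ 2 / 8 - r ^ 2 * q ^ 4 / 16 - 37 / (5184 * r ^ 2) := by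
  have hr0 : 0 < r := by linarith
  have hc := continuous_oneFail r
  have b1 : 1 / (2 * r) ≤ 2 / (3 * r) := by
    rw [div_le_div_iff₀ (by positivity) (by positivity)]; linarith
  rw [integral_split hc 0 (2 / (3 * r)) q, oneFail_one (by linarith) (by linarith) le_rfl b1,
    integral_cubic hq' 0 (1 / 4) 0 (-1 / 4 * r ^ 2) ?_]
  · field_simp
    ring
  · intro t h0 h1
    have h2 := h1.trans hq''
    rw [le_div_iff₀ (by positivity)] at h2
    rw [div_le_iff₀ (by positivity)] at h0
    rw [wid_lo (by linarith), integral_cut_low (by linarith) (by linarith)]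
    ring

lemma oneFail_mid {r : ℝ} (h : 4 / 3 ≤ r) (h' : r < 3 / 2) :
    oneFail r = (-37 * r ^ 4 + 216 * r ^ 2 - 37) / (5184 * r ^ 2) := by
  have hr0 : 0 < r := by linarith
  have hc := continuous_oneFail r
  have b2 : 2 / (3 * r) ≤ 1 / 2 := by rw [div_le_iff₀ (by positivity)]; linarith
  have b3 : 1 / 2 ≤ 1 / r := by rw [le_div_iff₀ (by positivity)]; linarith
  rw [oneFail, integral_split hc 0 (1 / 2) (2 / 3), oneFail_two h le_rfl b2 b3,
    integral_cubic (by norm_num) (1 / 2) (-3 / 4) (-1 / 2 * r ^ 2) (3 / 4 * r ^ 2) ?_]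
  · field_simp
    ring
  · intro t h0 h1
    rw [wid_hi h0, integral_cut_low (by nlinarith) (by nlinarith)]
    ring

lemma oneFail_large {r : ℝ} (h : 3 / 2 ≤ r) (h' : r < 2) :
    oneFail r = (27 * r ^ 4 - 648 * r ^ 2 + 1728 * r - 1009) / (5184 * r ^ 2) := by
  have hr0 : 0 < r := by linarith
  have hc := continuous_oneFail r
  have b2 : 2 / (3 * r) ≤ 1 / 2 := by rw [div_le_iff₀ (by positivity)]; linarith
  have b3 : 1 / 2 ≤ 1 / r := by rw [le_div_iff₀ (by positivity)]; linarith
  have b4 : 1 / r ≤ 2 / 3 := by rw [div_le_iff₀ (by positivity)]; linarith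
  rw [oneFail, integral_split hc 0 (1 / 2) (2 / 3), oneFail_two (by linarith) le_rfl b2 b3,
    integral_split hc (1 / 2) (1 / r) (2 / 3),
    integral_cubic b3 (1 / 2) (-3 / 4) (-1 / 2 * r ^ 2) (3 / 4 * r ^ 2) ?_,
    integral_cubic b4 0 0 0 0 ?_]
  · field_simp
    ring
  · intro t h0 h1
    rw [div_le_iff₀ (by positivity)] at h0
    rw [integral_cut_none (by linarith)]
    ring
  · intro t h0 h1
    rw [le_div_iff₀ (by positivity)] at h1
    rw [wid_hi h0, integral_cut_low (by linarith) (by nlinarith)]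
    ring

lemma oneFail_huge {r : ℝ} (h : 2 ≤ r) : oneFail r = 287 / (5184 * r ^ 2) := by
  have hr0 : 0 < r := by linarith
  have hc := continuous_oneFail r
  have b2 : 2 / (3 * r) ≤ 1 / r := by
    rw [div_le_div_iff₀ (by positivity) (by positivity)]; linarith
  have b3 : 1 / r ≤ 1 / 2 := by rw [div_le_iff₀ (by positivity)]; linarith
  rw [oneFail, integral_split hc 0 (1 / r) (2 / 3), oneFail_two (by linarith) b3 b2 le_rfl,
    integral_cubic (by linarith) 0 0 0 0 ?_]
  · field_simp
    ring
  · intro t h0 h1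
    rw [div_le_iff₀ (by positivity)] at h0
    rw [integral_cut_none (by linarith)]
    ring

/-! ### Points in different vertex regions: both conditions failing -/

/-- The weight of the pairs violating both conditions. -/
def bothFail (r : ℝ) : ℝ :=
  ∫ s in (0 : ℝ)..(2 / 3), ∫ t in (0 : ℝ)..(2 / 3), cut r s t * cut r t s

lemma continuous_inner_var {F : ℝ → ℝ → ℝ} (hF : Continuous (Function.uncurry F)) (a : ℝ) :
    Continuous fun s => ∫ t in a..s, F s t := by fun_prop

lemma continuous_inner_const {F : ℝ → ℝ → ℝ} (hF : Continuous (Function.uncurry F)) (a b : ℝ) :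
    Continuous fun s => ∫ t in a..b, F s t := by fun_prop

lemma continuous_cutMul (r : ℝ) :
    Continuous (Function.uncurry fun s t => cut r s t * cut r t s) := by
  unfold Function.uncurry; fun_prop

lemma bothFail_eq (r : ℝ) :
    bothFail r = 2 * ((∫ s in (0 : ℝ)..(1 / 2), ∫ t in (0 : ℝ)..s, cut r s t * cut r t s) +
      ((∫ s in (1 / 2 : ℝ)..(2 / 3), ∫ t in (0 : ℝ)..(1 / 2), cut r s t * cut r t s) +
        ∫ s in (1 / 2 : ℝ)..(2 / 3), ∫ t in (1 / 2 : ℝ)..s, cut r s t * cut r t s)) := by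
  have hc := continuous_cutMul r
  rw [bothFail, integral_square_symm hc (fun s t => mul_comm _ _) (by norm_num),
    integral_split (continuous_inner_var hc 0) 0 (1 / 2) (2 / 3),
    ← intervalIntegral.integral_add
      ((continuous_inner_const hc 0 (1 / 2)).intervalIntegrable _ _)
      ((continuous_inner_var hc (1 / 2)).intervalIntegrable _ _)]
  congr 3
  funext s
  exact integral_split (f := fun t => cut r s t * cut r t s) (by fun_prop) 0 (1 / 2) s

/-- The part of `bothFail` with `t ≤ s ≤ q`, as long as `q ≤ 1/2` and `q ≤ 1/r`. -/
lemma bothFail_lo {r : ℝ} (hr : 1 ≤ r) {q : ℝ} (hq : q ≤ 1 / 2) (hq' : r * q ≤ 1)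
    (hq'' : 1 / (1 + r) ≤ q) :
    ∫ s in (0 : ℝ)..q, ∫ t in (0 : ℝ)..s, cut r s t * cut r t s =
      (1 / (1 + r)) ^ 4 / 8 + (-1 / 2 / r * (q - 1 / (1 + r))
        + (1 + 1 / r) * ((q ^ 2 - (1 / (1 + r)) ^ 2) / 2)
        + (-1 / 2 * r - 1 - 1 / 2 / r) * ((q ^ 3 - (1 / (1 + r)) ^ 3) / 3)
        + 1 / 2 * ((q ^ 4 - (1 / (1 + r)) ^ 4) / 4)) := by
  have hr0 : 0 < r := by linarith
  have hc := continuous_cutMul r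
  have b0 : 0 ≤ 1 / (1 + r) := by positivity
  rw [integral_split (continuous_inner_var hc 0) 0 (1 / (1 + r)) q,
    integral_cubic b0 0 0 0 (1 / 2) ?_,
    integral_cubic hq'' (-1 / 2 / r) (1 + 1 / r) (-1 / 2 * r - 1 - 1 / 2 / r) (1 / 2) ?_]
  · ring
  · intro s h0 h1
    rw [div_le_iff₀ (by positivity)] at h0
    have hrs : r * s ≤ 1 := (mul_le_mul_of_nonneg_left h1 hr0.le).trans hq'
    have c1 : 1 - r * s ≤ (1 - s) / r := by rw [le_div_iff₀ hr0]; nlinarith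
    have c2 : (1 - s) / r ≤ s := by rw [div_le_iff₀ hr0]; linarith
    have hi : Continuous fun t => cut r s t * cut r t s := by fun_prop
    rw [integral_split hi 0 (1 - r * s) s, integral_split hi (1 - r * s) ((1 - s) / r) s,
      integral_cubic (by linarith) 0 s 0 0 ?_,
      integral_cubic c1 (s * (1 - r * s)) 0 0 0 ?_,
      integral_cubic c2 (1 - r * s) (-r * (1 - r * s)) 0 0 ?_]
    · field_simp
      ring
    · intro t t0 t1
      rw [div_le_iff₀ hr0] at t0
      rw [cut_lo_part (s := s) (by linarith) (by linarith) (by nlinarith),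
        cut_lo_part (s := t) (by linarith) (by nlinarith) (by linarith)]
      ring
    · intro t t0 t1
      rw [le_div_iff₀ hr0] at t1
      rw [cut_lo_full (s := s) (by nlinarith) (by linarith) (by linarith),
        cut_lo_part (s := t) (by nlinarith) (by linarith) (by linarith)]
      ring
    · intro t t0 t1
      have t2 := t1.trans c1
      rw [le_div_iff₀ hr0] at t2
      rw [cut_lo_full (s := s) (by nlinarith) (by linarith) (by linarith),
        cut_lo_full (s := t) t0 (by nlinarith) (by linarith)]
      ring
  · intro s h0 h1
    have h2 := h1.trans hq''
    rw [le_div_iff₀ (by positivity)] at h1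
    rw [integral_cubic h0 0 s 0 0 ?_]
    · ring
    · intro t t0 t1
      have : r * t ≤ r * s := mul_le_mul_of_nonneg_left t1 hr0.le
      rw [cut_lo_full (s := s) (by linarith) (by linarith) (by linarith),
        cut_lo_full (s := t) t0 (by linarith) (by linarith)]
      ring

lemma bothFail_one {r : ℝ} (hr : 1 ≤ r) (h : r < 2) :
    ∫ s in (0 : ℝ)..(1 / 2), ∫ t in (0 : ℝ)..s, cut r s t * cut r t s =
      (-8 * r ^ 3 + 27 * r ^ 2 - 21 * r + 8) / (384 * r * (r + 1)) := by
  have hr0 : 0 < r := by linarith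
  rw [bothFail_lo hr le_rfl (by linarith) (by rw [div_le_iff₀ (by positivity)]; linarith)]
  field_simp
  ring

lemma bothFail_huge {r : ℝ} (h : 2 ≤ r) :
    bothFail r = (3 * r - 1) / (12 * r ^ 4 * (r + 1)) := by
  have hr0 : 0 < r := by linarith
  have hc := continuous_cutMul r
  have b1 : 1 / r ≤ 1 / 2 := by rw [div_le_iff₀ (by positivity)]; linarith
  have b2 : 1 / (1 + r) ≤ 1 / r := by
    rw [div_le_div_iff₀ (by positivity) (by positivity)]; linarith
  rw [bothFail_eq, integral_split (continuous_inner_var hc 0) 0 (1 / r) (1 / 2),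
    bothFail_lo (by linarith) b1 (by rw [mul_one_div_cancel hr0.ne']) b2,
    integral_cubic b1 0 0 0 0 ?_,
    integral_cubic (f := fun s => ∫ t in (0 : ℝ)..(1 / 2), cut r s t * cut r t s)
      (by norm_num) 0 0 0 0 ?_,
    integral_cubic (f := fun s => ∫ t in (1 / 2 : ℝ)..s, cut r s t * cut r t s)
      (by norm_num) 0 0 0 0 ?_]
  · field_simp
    ring
  · intro s h0 h1
    rw [integral_cubic h0 0 0 0 0 ?_]
    · ring
    · intro t t0 t1
      rw [cut_hi_zero (s := t) t0 (by linarith) (by nlinarith)]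
      ring
  · intro s h0 h1
    rw [integral_cubic (by norm_num) 0 0 0 0 ?_]
    · ring
    · intro t t0 t1
      rw [cut_lo_zero (s := t) t0 t1 (by nlinarith)]
      ring
  · intro s h0 h1
    have h2 : 0 ≤ s := le_trans (by positivity) h0
    rw [div_le_iff₀ (by positivity)] at h0
    rw [integral_cubic h2 0 0 0 0 ?_]
    · ring
    · intro t t0 t1
      rw [cut_lo_zero (s := t) t0 (by linarith) (by linarith)]
      ring

/-- The common part `t ≤ s / r` of the inner integral for `1/2 ≤ s`. -/
lemma bothFail_two_inner {r s : ℝ} (hr : 1 ≤ r) (h0 : 1 / 2 ≤ s) (h1 : s ≤ 2 / 3)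
    (hrs : r * s ≤ 1) {q : ℝ} (hq : q ≤ 1 / 2) (hq' : 1 - r * s ≤ q) (hq'' : q ≤ s / r) :
    ∫ t in (0 : ℝ)..q, cut r s t * cut r t s =
      (2 - 3 * s) * (1 - r * s) ^ 2 / 2 + (2 - 3 * s) * (1 - r * s) * (q - (1 - r * s)) := by
  have hr0 : 0 < r := by linarith
  have hi : Continuous fun t => cut r s t * cut r t s := by fun_prop
  rw [le_div_iff₀ hr0] at hq''
  rw [integral_split hi 0 (1 - r * s) q, integral_cubic (by linarith) 0 (2 - 3 * s) 0 0 ?_,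
    integral_cubic hq' ((2 - 3 * s) * (1 - r * s)) 0 0 0 ?_]
  · ring
  · intro t t0 t1
    rw [cut_hi_full h0 h1 (by nlinarith), cut_lo_part (by linarith) t0 (by linarith)]
    ring
  · intro t t0 t1
    rw [cut_hi_full h0 h1 (by nlinarith), cut_lo_full t0 (by linarith) t1]
    ring

lemma one_sub_le_div {r s : ℝ} (hr : 1 ≤ r) (h0 : 1 / 2 ≤ s) : 1 - r * s ≤ s / r := by
  have hr0 : 0 < r := by linarith
  rw [le_div_iff₀ hr0]
  nlinarith [sq_nonneg (r - 1)]

lemma bothFail_two_half {r s : ℝ} (hr : 1 ≤ r) (h0 : 1 / 2 ≤ s) (h1 : s ≤ 2 / 3)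
    (hrs : r * s ≤ 1) (h2 : s ≤ r / 2) (h3 : r / 2 ≤ 2 - 2 * s) :
    ∫ t in (0 : ℝ)..(1 / 2), cut r s t * cut r t s =
      -1 / 8 * r + (1 / 8 * r ^ 2 + r + 1 / 2) * s + (-1 * r ^ 2 - 2 * r - 1 / 2 / r) * s ^ 2
        + (3 / 2 * r ^ 2 + 1 / 2) * s ^ 3 := by
  have hr0 : 0 < r := by linarith
  have hi : Continuous fun t => cut r s t * cut r t s := by fun_prop
  have c2 : s / r ≤ 1 / 2 := by rw [div_le_iff₀ hr0]; linarith
  rw [integral_split hi 0 (s / r) (1 / 2),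
    bothFail_two_inner hr h0 h1 hrs c2 (one_sub_le_div hr h0) le_rfl,
    integral_cubic c2 ((2 - 2 * s) * (1 - r * s)) (-r * (1 - r * s)) 0 0 ?_]
  · field_simp
    ring
  · intro t t0 t1
    have t2 := (one_sub_le_div hr h0).trans t0
    rw [div_le_iff₀ hr0] at t0
    rw [cut_hi_part h0 (by linarith) (by nlinarith), cut_lo_part t1 t2 (by linarith)]
    ring

lemma bothFail_two_small {r : ℝ} (hr : 1 ≤ r) (h : r < 4 / 3) :
    ∫ s in (1 / 2 : ℝ)..(2 / 3), ∫ t in (0 : ℝ)..(1 / 2), cut r s t * cut r t s =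
      (27 * r ^ 5 - 445 * r ^ 3 + 984 * r ^ 2 - 729 * r + 216) / (10368 * r) := by
  have hr0 : 0 < r := by linarith
  have hc := continuous_cutMul r
  rw [integral_split (continuous_inner_const hc 0 (1 / 2)) (1 / 2) (r / 2) (2 / 3),
    integral_cubic (by linarith) (-1 / 8 * r) (1 / 8 * r ^ 2 + r + 1 / 2)
      (-1 * r ^ 2 - 2 * r - 1 / 2 / r) (3 / 2 * r ^ 2 + 1 / 2) ?_,
    integral_cubic (by linarith) 0 r (-1 * r ^ 2 - 3 / 2 * r) (3 / 2 * r ^ 2) ?_]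
  · field_simp
    ring
  · intro s h0 h1
    rw [bothFail_two_inner hr (by linarith) h1 (by nlinarith) le_rfl (by nlinarith)
      (by rw [le_div_iff₀ hr0]; linarith)]
    ring
  · intro s h0 h1
    exact bothFail_two_half hr h0 (by linarith) (by nlinarith) h1 (by linarith)

/-- For `4/3 ≤ r` the contribution of `1/2 ≤ s ≤ q` to the region `t ≤ 1/2 ≤ s`, where the
product vanishes for `t ≥ (2 - 2s)/r`. -/
lemma bothFail_two_large {r : ℝ} (h : 4 / 3 ≤ r) (h' : r < 2) {q : ℝ} (hq : 1 - r / 4 ≤ q)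
    (hq' : q ≤ 2 / 3) (hq'' : r * q ≤ 1) :
    ∫ s in (1 / 2 : ℝ)..q, ∫ t in (0 : ℝ)..(1 / 2), cut r s t * cut r t s =
      -1 / 8 * r * (1 - r / 4 - 1 / 2)
        + (1 / 8 * r ^ 2 + r + 1 / 2) * (((1 - r / 4) ^ 2 - (1 / 2) ^ 2) / 2)
        + (-1 * r ^ 2 - 2 * r - 1 / 2 / r) * (((1 - r / 4) ^ 3 - (1 / 2) ^ 3) / 3)
        + (3 / 2 * r ^ 2 + 1 / 2) * (((1 - r / 4) ^ 4 - (1 / 2) ^ 4) / 4)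
        + ((-1 + 2 / r) * (q - (1 - r / 4))
        + (2 * r - 1 / 2 - 4 / r) * ((q ^ 2 - (1 - r / 4) ^ 2) / 2)
        + (-1 * r ^ 2 - 3 * r + 4 + 3 / 2 / r) * ((q ^ 3 - (1 - r / 4) ^ 3) / 3)
        + (3 / 2 * r ^ 2 - 3 / 2) * ((q ^ 4 - (1 - r / 4) ^ 4) / 4)) := by
  have hr0 : 0 < r := by linarith
  have hr : 1 ≤ r := by linarith
  have hc := continuous_cutMul r
  rw [integral_split (continuous_inner_const hc 0 (1 / 2)) (1 / 2) (1 - r / 4) q,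
    integral_cubic (by linarith) (-1 / 8 * r) (1 / 8 * r ^ 2 + r + 1 / 2)
      (-1 * r ^ 2 - 2 * r - 1 / 2 / r) (3 / 2 * r ^ 2 + 1 / 2) ?_,
    integral_cubic hq (-1 + 2 / r) (2 * r - 1 / 2 - 4 / r)
      (-1 * r ^ 2 - 3 * r + 4 + 3 / 2 / r) (3 / 2 * r ^ 2 - 3 / 2) ?_]
  · intro s h0 h1
    have hs : 1 / 2 ≤ s := by linarith
    have hrs : r * s ≤ 1 := (mul_le_mul_of_nonneg_left h1 hr0.le).trans hq''
    have hi : Continuous fun t => cut r s t * cut r t s := by fun_prop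
    have c1 := one_sub_le_div hr hs
    have c2 : s / r ≤ (2 - 2 * s) / r := by gcongr; linarith
    have c3 : (2 - 2 * s) / r ≤ 1 / 2 := by rw [div_le_iff₀ hr0]; linarith
    rw [integral_split hi 0 (s / r) (1 / 2),
      integral_split hi (s / r) ((2 - 2 * s) / r) (1 / 2),
      bothFail_two_inner hr hs (by linarith) hrs (c2.trans c3) c1 le_rfl,
      integral_cubic c2 ((2 - 2 * s) * (1 - r * s)) (-r * (1 - r * s)) 0 0 ?_,
      integral_cubic c3 0 0 0 0 ?_]
    · field_simp
      ring
    · intro t t0 t1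
      rw [div_le_iff₀ hr0] at t0
      rw [cut_hi_zero hs (by linarith) (by linarith)]
      ring
    · intro t t0 t1
      have t2 := t1.trans c3
      have t3 := c1.trans t0
      rw [div_le_iff₀ hr0] at t0
      rw [le_div_iff₀ hr0] at t1
      rw [cut_hi_part hs (by linarith) (by linarith), cut_lo_part t2 t3 (by linarith)]
      ring
  · intro s h0 h1
    have hrs : r * s ≤ 1 := (mul_le_mul_of_nonneg_left (h1.trans hq) hr0.le).trans hq''
    exact bothFail_two_half hr h0 (by linarith) hrs (by linarith) (by linarith)

lemma bothFail_two_mid {r : ℝ} (h : 4 / 3 ≤ r) (h' : r < 3 / 2) :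
    ∫ s in (1 / 2 : ℝ)..(2 / 3), ∫ t in (0 : ℝ)..(1 / 2), cut r s t * cut r t s =
      (27 * r ^ 5 - 432 * r ^ 4 + 2108 * r ^ 3 - 5088 * r ^ 2 + 5788 * r - 2208)
        / (41472 * r) := by
  have hr0 : 0 < r := by linarith
  rw [bothFail_two_large h (by linarith) (by linarith) le_rfl (by linarith)]
  field_simp
  ring

lemma bothFail_two_upper {r : ℝ} (h : 3 / 2 ≤ r) (h' : r < 2) :
    ∫ s in (1 / 2 : ℝ)..(2 / 3), ∫ t in (0 : ℝ)..(1 / 2), cut r s t * cut r t s =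
      (r ^ 8 - 16 * r ^ 7 + 116 * r ^ 6 - 416 * r ^ 5 + 916 * r ^ 4 - 1504 * r ^ 3 + 1728 * r ^ 2
        - 1024 * r + 192) / (1536 * r ^ 4) := by
  have hr0 : 0 < r := by linarith
  have hc := continuous_cutMul r
  have b1 : 1 - r / 4 ≤ 1 / r := by rw [le_div_iff₀ hr0]; nlinarith [sq_nonneg (r - 2)]
  have b2 : 1 / r ≤ 2 / 3 := by rw [div_le_iff₀ hr0]; linarith
  rw [integral_split (continuous_inner_const hc 0 (1 / 2)) (1 / 2) (1 / r) (2 / 3),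
    bothFail_two_large (by linarith) h' b1 b2 (by rw [mul_one_div_cancel hr0.ne']),
    integral_cubic b2 0 0 0 0 ?_]
  · field_simp
    ring
  · intro s h0 h1
    rw [div_le_iff₀ hr0] at h0
    rw [integral_cubic (by norm_num) 0 0 0 0 ?_]
    · ring
    · intro t t0 t1
      rw [cut_lo_zero t0 t1 (by linarith)]
      ring

/-- On `1/2 ≤ t ≤ s ≤ 2/3`, truncated linear functions replace the minimum in `cut`; this keeps
the number of cells independent of the relative position of `r/2` and `2/(r+2)`. -/
lemma cutMul_hi {r s t : ℝ} (hr : 1 ≤ r) (hr' : r ≤ 2) (h0 : 1 / 2 ≤ t) (h1 : t ≤ s)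
    (h2 : s ≤ 2 / 3) :
    cut r s t * cut r t s = max 0 (2 - 2 * s - r * t) * (2 - 2 * t - r * s)
      - max 0 (s - r * t) * (2 - 2 * t - r * s) := by
  have e1 : t ≤ r * s := by nlinarith
  have e2 : 2 * t + r * s ≤ 2 * s + r * t := by nlinarith
  rcases le_total (r * t) s with hA | hA
  · rw [cut_hi_full (by linarith) h2 hA, cut_hi_part h0 e1 (by linarith),
      max_eq_right (by linarith), max_eq_right (by linarith)]
    ring
  · rw [max_eq_left (a := (0 : ℝ)) (b := s - r * t) (by linarith)]
    rcases le_total (r * t) (2 - 2 * s) with hB | hB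
    · rw [cut_hi_part (by linarith) hA hB, cut_hi_part h0 e1 (by linarith),
        max_eq_right (by linarith)]
      ring
    · rw [cut_hi_zero (by linarith) h2 hB, max_eq_left (by linarith)]
      ring

lemma continuous_hiMain (r : ℝ) : Continuous (Function.uncurry
    fun s t : ℝ => max 0 (2 - 2 * s - r * t) * (2 - 2 * t - r * s)) := by
  unfold Function.uncurry; fun_prop

lemma continuous_hiCorr (r : ℝ) : Continuous (Function.uncurry
    fun s t : ℝ => max 0 (s - r * t) * (2 - 2 * t - r * s)) := by
  unfold Function.uncurry; fun_prop

lemma bothFail_three_eq {r : ℝ} (hr : 1 ≤ r) (hr' : r ≤ 2) :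
    ∫ s in (1 / 2 : ℝ)..(2 / 3), ∫ t in (1 / 2 : ℝ)..s, cut r s t * cut r t s =
      (∫ s in (1 / 2 : ℝ)..(2 / 3), ∫ t in (1 / 2 : ℝ)..s,
        max 0 (2 - 2 * s - r * t) * (2 - 2 * t - r * s))
      - ∫ s in (1 / 2 : ℝ)..(2 / 3), ∫ t in (1 / 2 : ℝ)..s,
        max 0 (s - r * t) * (2 - 2 * t - r * s) := by
  rw [← intervalIntegral.integral_sub
    ((continuous_inner_var (continuous_hiMain r) (1 / 2)).intervalIntegrable _ _)
    ((continuous_inner_var (continuous_hiCorr r) (1 / 2)).intervalIntegrable _ _)]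
  apply intervalIntegral.integral_congr
  intro s hs
  rw [Set.uIcc_of_le (by norm_num)] at hs
  beta_reduce
  rw [← intervalIntegral.integral_sub (Continuous.intervalIntegrable (by fun_prop) _ _)
    (Continuous.intervalIntegrable (by fun_prop) _ _)]
  apply intervalIntegral.integral_congr
  intro t ht
  rw [Set.uIcc_of_le hs.1] at ht
  exact cutMul_hi hr hr' ht.1 ht.2 hs.2

lemma hiMain {r : ℝ} (hr : 1 ≤ r) (hr' : r < 2) {q : ℝ} (hq : 2 / (r + 2) ≤ q)
    (hq' : q ≤ 1 - r / 4) :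
    ∫ s in (1 / 2 : ℝ)..q, ∫ t in (1 / 2 : ℝ)..s,
        max 0 (2 - 2 * s - r * t) * (2 - 2 * t - r * s) =
      (1 / 6 * r - 3 / 2) * (2 / (r + 2) - 1 / 2)
        + (-1 / 8 * r ^ 2 + r + 11 / 2) * (((2 / (r + 2)) ^ 2 - (1 / 2) ^ 2) / 2)
        + (-4 * r - 6) * (((2 / (r + 2)) ^ 3 - (1 / 2) ^ 3) / 3)
        + (1 / 2 * r ^ 2 + 8 / 3 * r + 2) * (((2 / (r + 2)) ^ 4 - (1 / 2) ^ 4) / 4)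
        + ((1 / 6 * r - 3 / 2 + 4 / r - 8 / 3 / r ^ 2) * (q - 2 / (r + 2))
        + (-1 / 8 * r ^ 2 + r - 1 / 2 - 8 / r + 8 / r ^ 2) * ((q ^ 2 - (2 / (r + 2)) ^ 2) / 2)
        + (-1 * r + 4 + 4 / r - 8 / r ^ 2) * ((q ^ 3 - (2 / (r + 2)) ^ 3) / 3)
        + (-2 + 8 / 3 / r ^ 2) * ((q ^ 4 - (2 / (r + 2)) ^ 4) / 4)) := by
  have hr0 : 0 < r := by linarith
  have b1 : 1 / 2 ≤ 2 / (r + 2) := by rw [le_div_iff₀ (by positivity)]; linarith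
  rw [integral_split (continuous_inner_var (continuous_hiMain r) (1 / 2)) (1 / 2) (2 / (r + 2)) q,
    integral_cubic b1 (1 / 6 * r - 3 / 2) (-1 / 8 * r ^ 2 + r + 11 / 2) (-4 * r - 6)
      (1 / 2 * r ^ 2 + 8 / 3 * r + 2) ?_,
    integral_cubic hq (1 / 6 * r - 3 / 2 + 4 / r - 8 / 3 / r ^ 2)
      (-1 / 8 * r ^ 2 + r - 1 / 2 - 8 / r + 8 / r ^ 2) (-1 * r + 4 + 4 / r - 8 / r ^ 2)
      (-2 + 8 / 3 / r ^ 2) ?_]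
  · intro s h0 h1
    rw [div_le_iff₀ (by positivity)] at h0
    have hi : Continuous fun t => max 0 (2 - 2 * s - r * t) * (2 - 2 * t - r * s) := by fun_prop
    have c1 : 1 / 2 ≤ (2 - 2 * s) / r := by rw [le_div_iff₀ hr0]; linarith
    have c2 : (2 - 2 * s) / r ≤ s := by rw [div_le_iff₀ hr0]; linarith
    rw [integral_split hi (1 / 2) ((2 - 2 * s) / r) s,
      integral_cubic c1 ((2 - 2 * s) * (2 - r * s)) (-(2 * (2 - 2 * s) + r * (2 - r * s)))
        (2 * r) 0 ?_,
      integral_cubic c2 0 0 0 0 ?_]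
    · field_simp
      ring
    · intro t t0 t1
      rw [div_le_iff₀ hr0] at t0
      rw [max_eq_left (by linarith)]
      ring
    · intro t t0 t1
      rw [le_div_iff₀ hr0] at t1
      rw [max_eq_right (by linarith)]
      ring
  · intro s h0 h1
    rw [le_div_iff₀ (by positivity)] at h1
    rw [integral_cubic h0 ((2 - 2 * s) * (2 - r * s)) (-(2 * (2 - 2 * s) + r * (2 - r * s)))
        (2 * r) 0 ?_]
    · ring
    · intro t t0 t1
      rw [max_eq_right (by nlinarith)]
      ring

lemma bothFail_three_small {r : ℝ} (hr : 1 ≤ r) (h : r < 4 / 3) :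
    ∫ s in (1 / 2 : ℝ)..(2 / 3), ∫ t in (1 / 2 : ℝ)..s, cut r s t * cut r t s =
      (-621 * r ^ 5 + 3462 * r ^ 4 - 7188 * r ^ 3 + 6744 * r ^ 2 - 2816 * r + 512)
        / (31104 * r ^ 2 * (r + 2))
      - (81 * r ^ 6 - 1674 * r ^ 4 + 4992 * r ^ 3 - 5952 * r ^ 2 + 3072 * r - 512)
        / (31104 * r ^ 2) := by
  have hr0 : 0 < r := by linarith
  rw [bothFail_three_eq hr (by linarith),
    hiMain hr (by linarith) (by rw [div_le_iff₀ (by positivity)]; linarith) (by linarith),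
    integral_split (continuous_inner_var (continuous_hiCorr r) (1 / 2)) (1 / 2) (r / 2) (2 / 3),
    integral_cubic (by linarith) 0 0 0 0 ?_,
    integral_cubic (by linarith) (1 / 6 * r) (-1 / 8 * r ^ 2 - 3 / 4) (1 / 2 * r + 1 / r)
      (-1 / 2 - 1 / 3 / r ^ 2) ?_]
  · field_simp
    ring
  · intro s h0 h1
    have hi : Continuous fun t => max 0 (s - r * t) * (2 - 2 * t - r * s) := by fun_prop
    have c1 : 1 / 2 ≤ s / r := by rw [le_div_iff₀ hr0]; linarith
    have c2 : s / r ≤ s := by rw [div_le_iff₀ hr0]; nlinarith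
    rw [integral_split hi (1 / 2) (s / r) s,
      integral_cubic c1 (s * (2 - r * s)) (-(2 * s + r * (2 - r * s))) (2 * r) 0 ?_,
      integral_cubic c2 0 0 0 0 ?_]
    · field_simp
      ring
    · intro t t0 t1
      rw [div_le_iff₀ hr0] at t0
      rw [max_eq_left (by linarith)]
      ring
    · intro t t0 t1
      rw [le_div_iff₀ hr0] at t1
      rw [max_eq_right (by linarith)]
      ring
  · intro s h0 h1
    rw [integral_cubic h0 0 0 0 0 ?_]
    · ring
    · intro t t0 t1
      rw [max_eq_left (by nlinarith)]
      ring

lemma bothFail_three_large {r : ℝ} (h : 4 / 3 ≤ r) (h' : r < 2) :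
    ∫ s in (1 / 2 : ℝ)..(2 / 3), ∫ t in (1 / 2 : ℝ)..s, cut r s t * cut r t s =
      (-r ^ 5 + 14 * r ^ 4 - 72 * r ^ 3 + 176 * r ^ 2 - 208 * r + 96) / (1536 * (r + 2)) := by
  have hr0 : 0 < r := by linarith
  have hr : 1 ≤ r := by linarith
  have b1 : 2 / (r + 2) ≤ 1 - r / 4 := by rw [div_le_iff₀ (by positivity)]; nlinarith
  rw [bothFail_three_eq hr h'.le,
    integral_split (continuous_inner_var (continuous_hiMain r) (1 / 2)) (1 / 2) (1 - r / 4) (2 / 3),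
    hiMain hr h' b1 le_rfl,
    integral_cubic (f := fun s => ∫ t in (1 / 2 : ℝ)..s,
      max 0 (2 - 2 * s - r * t) * (2 - 2 * t - r * s)) (by linarith) 0 0 0 0 ?_,
    integral_cubic (f := fun s => ∫ t in (1 / 2 : ℝ)..s,
      max 0 (s - r * t) * (2 - 2 * t - r * s)) (by norm_num) 0 0 0 0 ?_]
  · field_simp
    ring
  · intro s h0 h1
    rw [integral_cubic h0 0 0 0 0 ?_]
    · ring
    · intro t t0 t1
      rw [max_eq_left (by nlinarith)]
      ring
  · intro s h0 h1
    rw [integral_cubic (by linarith) 0 0 0 0 ?_]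
    · ring
    · intro t t0 t1
      rw [max_eq_left (by nlinarith)]
      ring

/-- The probability expressed through the weights of the failing conditions: `12` and `24` are
`3` and `6` (numbers of pairs of equal, resp. distinct, vertices) times the squared density `4`. -/
def pandInt (r : ℝ) : ℝ :=
  12 * (highTail r - lowTail r) + 24 * (1 / 36 - 2 * oneFail r + bothFail r)

lemma pandInt_formula (r : ℝ) (hr : 1 ≤ r) :
    (r < 4 / 3 →
      pandInt r = (1 - r) * (5 * r ^ 5 - 148 * r ^ 4 + 245 * r ^ 3 - 178 * r ^ 2
          - 232 * r + 128) / (54 * r ^ 2 * (r + 2) * (r + 1))) ∧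
    (4 / 3 ≤ r → r < 3 / 2 →
      pandInt r = -(101 * r ^ 5 - 801 * r ^ 4 + 1302 * r ^ 3 - 732 * r ^ 2
          - 536 * r + 672) / (216 * r * (r + 2) * (r + 1))) ∧
    (3 / 2 ≤ r → r < 2 →
      pandInt r = (r ^ 8 - 13 * r ^ 7 + 30 * r ^ 6 + 148 * r ^ 5 - 448 * r ^ 4
          + 264 * r ^ 3 + 288 * r ^ 2 - 368 * r + 96) / (8 * r ^ 4 * (r + 2) * (r + 1))) ∧
    (2 ≤ r →
      pandInt r = (r ^ 3 + 3 * r ^ 2 + 2 * r - 2) * (r - 1) ^ 2 / (r ^ 4 * (r + 1))) := by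
  have hr0 : 0 < r := by linarith
  refine ⟨fun h => ?_, fun h h' => ?_, fun h h' => ?_, fun h => ?_⟩
  · rw [pandInt, highTail_small hr h, lowTail_small hr h, oneFail_small hr h, bothFail_eq,
      bothFail_one hr (by linarith), bothFail_two_small hr h, bothFail_three_small hr h]
    field_simp
    ring
  · rw [pandInt, highTail_large h, lowTail_large h, oneFail_mid h h', bothFail_eq,
      bothFail_one hr (by linarith), bothFail_two_mid h h',
      bothFail_three_large h (by linarith)]
    field_simp
    ring
  · have h4 : 4 / 3 ≤ r := by linarith
    rw [pandInt, highTail_large h4, lowTail_large h4, oneFail_large h h', bothFail_eq,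
      bothFail_one hr h', bothFail_two_upper h h', bothFail_three_large h4 h']
    field_simp
    ring
  · have h4 : 4 / 3 ≤ r := by linarith
    rw [pandInt, highTail_large h4, lowTail_large h4, oneFail_huge h, bothFail_huge h]
    field_simp
    ring

/-! ### The reference triangle -/

/-- The image of the triangle in the coordinates `(s, b) = (1 - bᵢ, bⱼ)`; the third barycentric
coordinate is `s - b`. -/
def refTri : Set (ℝ × ℝ) := {p | 0 ≤ p.2 ∧ p.2 ≤ p.1 ∧ p.1 ≤ 1}

lemma measurableSet_refTri : MeasurableSet refTri := by
  unfold refTri; measurability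

lemma volume_refTri : volume refTri = ENNReal.ofReal (1 / 2) := by
  rw [Measure.volume_eq_prod, Measure.prod_apply measurableSet_refTri]
  have hslice : ∀ s : ℝ, volume (Prod.mk s ⁻¹' refTri)
      = (Set.Ioc (0 : ℝ) 1).indicator (fun s => ENNReal.ofReal s) s := by
    intro s
    by_cases hs : s ∈ Set.Ioc (0 : ℝ) 1
    · have : Prod.mk s ⁻¹' refTri = Set.Icc 0 s := by
        ext b
        simp only [refTri, Set.mem_preimage, Set.mem_ofPred_eq, Set.mem_Icc]
        exact ⟨fun h => ⟨h.1, h.2.1⟩, fun h => ⟨h.1, h.2, hs.2⟩⟩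
      rw [this, Real.volume_Icc, Set.indicator_of_mem hs, sub_zero]
    · have : Prod.mk s ⁻¹' refTri ⊆ {0} := by
        intro b hb
        simp only [refTri, Set.mem_preimage, Set.mem_ofPred_eq] at hb
        simp only [Set.mem_Ioc, not_and_or, not_lt, not_le] at hs
        rcases hs with hs | hs
        · exact le_antisymm (hb.2.1.trans hs) hb.1
        · linarith [hb.2.2]
      rw [Set.indicator_of_notMem hs]
      exact measure_mono_null this Real.volume_singleton
  simp_rw [hslice]
  rw [lintegral_indicator measurableSet_Ioc, ← ofReal_integral_eq_lintegral_ofReal]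
  · rw [← intervalIntegral.integral_of_le zero_le_one]
    simp
  · exact (continuous_id.integrableOn_Icc).mono_set Set.Ioc_subset_Icc_self
  · filter_upwards [ae_restrict_mem measurableSet_Ioc] with s hs using hs.1.le

/-- The uniform probability distribution on the reference triangle. -/
def refUnif : Measure (ℝ × ℝ) := (2 : ENNReal) • volume.restrict refTri

instance : SFinite refUnif := by unfold refUnif; infer_instance

/-- Integrating over `((s, b), (t, c))` with the heights `s, t` on the outside. -/
lemma volume_four {G : Set ((ℝ × ℝ) × (ℝ × ℝ))} (hG : MeasurableSet G) :
    (volume.prod volume : Measure ((ℝ × ℝ) × (ℝ × ℝ))) G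
      = ∫⁻ t : ℝ, ∫⁻ s : ℝ, volume {p : ℝ × ℝ | ((s, p.1), (t, p.2)) ∈ G} := by
  have hm : Measurable (G.indicator (fun _ => (1 : ENNReal))) := measurable_const.indicator hG
  calc (volume.prod volume : Measure ((ℝ × ℝ) × (ℝ × ℝ))) G
      = ∫⁻ q, G.indicator (fun _ => (1 : ENNReal)) q ∂(volume.prod volume) := by
        rw [lintegral_indicator hG, lintegral_one, Measure.restrict_apply_univ]
    _ = ∫⁻ p : ℝ × ℝ, ∫⁻ q : ℝ × ℝ, G.indicator (fun _ => (1 : ENNReal)) (p, q) :=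
        lintegral_prod _ hm.aemeasurable
    _ = ∫⁻ q : ℝ × ℝ, ∫⁻ p : ℝ × ℝ, G.indicator (fun _ => (1 : ENNReal)) (p, q) :=
        lintegral_lintegral_swap hm.aemeasurable
    _ = ∫⁻ t : ℝ, ∫⁻ c : ℝ, ∫⁻ s : ℝ, ∫⁻ b : ℝ,
          G.indicator (fun _ => (1 : ENNReal)) ((s, b), (t, c)) := by
        rw [Measure.volume_eq_prod, lintegral_prod]
        · refine lintegral_congr fun t => lintegral_congr fun c => ?_
          rw [lintegral_prod]
          exact (hm.comp (by fun_prop : Measurable fun p : ℝ × ℝ => (p, (t, c)))).aemeasurable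
        · exact (Measurable.lintegral_prod_left' hm).aemeasurable
    _ = ∫⁻ t : ℝ, ∫⁻ s : ℝ, ∫⁻ c : ℝ, ∫⁻ b : ℝ,
          G.indicator (fun _ => (1 : ENNReal)) ((s, b), (t, c)) := by
        refine lintegral_congr fun t => ?_
        apply lintegral_lintegral_swap
        apply Measurable.aemeasurable
        exact Measurable.lintegral_prod_right' (f := fun q : (ℝ × ℝ) × ℝ =>
          G.indicator (fun _ => (1 : ENNReal)) ((q.1.2, q.2), (t, q.1.1)))
          (hm.comp (by fun_prop))
    _ = _ := by
        refine lintegral_congr fun t => lintegral_congr fun s => ?_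
        have hS : MeasurableSet {p : ℝ × ℝ | ((s, p.1), (t, p.2)) ∈ G} :=
          (by fun_prop : Measurable fun p : ℝ × ℝ => ((s, p.1), (t, p.2))) hG
        rw [Measure.volume_eq_prod, Measure.prod_apply_symm hS]
        refine lintegral_congr fun c => ?_
        rw [← lintegral_indicator_one (measurable_prodMk_right hS)]
        rfl

lemma refUnif_prod_apply {G : Set ((ℝ × ℝ) × (ℝ × ℝ))} (hG : MeasurableSet G)
    (hsub : G ⊆ refTri ×ˢ refTri) :
    (refUnif.prod refUnif) G
      = 4 * ∫⁻ t : ℝ, ∫⁻ s : ℝ, volume {p : ℝ × ℝ | ((s, p.1), (t, p.2)) ∈ G} := by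
  rw [← volume_four hG, refUnif, Measure.prod_smul_left, Measure.prod_smul_right,
    Measure.prod_restrict, Measure.smul_apply, Measure.smul_apply, smul_eq_mul, smul_eq_mul,
    Measure.restrict_eq_self _ hsub, ← mul_assoc]
  norm_num

/-- The part of the reference triangle where the vertex at the origin has the strictly largest
barycentric coordinate. -/
def refCell : Set (ℝ × ℝ) :=
  {p | 0 ≤ p.2 ∧ p.2 ≤ p.1 ∧ p.1 ≤ 1 ∧ p.2 < 1 - p.1 ∧ p.1 - p.2 < 1 - p.1}

lemma measurableSet_refCell : MeasurableSet refCell := by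
  unfold refCell; measurability

lemma volume_of_Ioo_Icc {S : Set ℝ} {a b : ℝ} (h1 : Set.Ioo a b ⊆ S) (h2 : S ⊆ Set.Icc a b) :
    volume S = ENNReal.ofReal (b - a) := by
  apply le_antisymm
  · simpa using measure_mono (μ := volume) h2
  · simpa using measure_mono (μ := volume) h1

lemma volume_refCell_slice (s : ℝ) :
    volume {b : ℝ | (s, b) ∈ refCell} = ENNReal.ofReal (wid s) := by
  rw [volume_of_Ioo_Icc (a := max 0 (2 * s - 1)) (b := min s (1 - s))]
  · by_cases hs : 0 ≤ s ∧ s ≤ 2 / 3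
    · congr 1
      unfold wid
      rcases le_total s (1 / 2) with h | h
      · rw [max_eq_left (by linarith), min_eq_left (by linarith), min_eq_left (by linarith)]; ring
      · rw [max_eq_right (by linarith), min_eq_right (by linarith), min_eq_right (by linarith)]
        ring
    · rw [ENNReal.ofReal_of_nonpos, ENNReal.ofReal_of_nonpos]
      · unfold wid
        by_contra! h
        rw [lt_min_iff] at h
        exact hs ⟨h.1.le, by linarith⟩
      · by_contra! h
        rw [sub_pos, lt_min_iff, max_lt_iff, max_lt_iff] at h
        exact hs ⟨by linarith, by linarith⟩
  · intro b hb
    simp only [Set.mem_Ioo, max_lt_iff, lt_min_iff] at hb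
    simp only [refCell, Set.mem_ofPred_eq]
    refine ⟨?_, ?_, ?_, ?_, ?_⟩ <;> linarith
  · intro b hb
    simp only [refCell, Set.mem_ofPred_eq] at hb
    simp only [Set.mem_Icc, max_le_iff, le_min_iff]
    refine ⟨⟨?_, ?_⟩, ?_, ?_⟩ <;> linarith

lemma cut_le_wid (r s t : ℝ) : cut r s t ≤ wid s := min_le_left _ _

/-- The points of height `s` in the cell which satisfy the extra condition `1 - b ≤ r t`. -/
lemma volume_refCell_slice_cut (r s t : ℝ) :
    volume {b : ℝ | (s, b) ∈ refCell ∧ 1 - b ≤ r * t} = ENNReal.ofReal (wid s - cut r s t) := by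
  rw [volume_of_Ioo_Icc (a := max (max 0 (2 * s - 1)) (1 - r * t)) (b := min s (1 - s))]
  · by_cases hs : 0 ≤ s ∧ s ≤ 2 / 3
    · have hw : wid s = min s (1 - s) - max 0 (2 * s - 1) := by
        unfold wid
        rcases le_total s (1 / 2) with h | h
        · rw [max_eq_left (by linarith), min_eq_left (by linarith), min_eq_left (by linarith)]
          ring
        · rw [max_eq_right (by linarith), min_eq_right (by linarith),
            min_eq_right (by linarith)]
          ring
      have hw0 : 0 ≤ wid s := le_min hs.1 (by linarith)
      unfold cut
      set m := max 0 (2 * s - 1)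
      set M := min s (1 - s)
      rcases le_total (1 - r * t) m with h | h
      · rw [max_eq_left h, max_eq_left (by linarith : 1 - r * t - m ≤ 0), min_eq_right hw0, hw,
          sub_zero]
      · rw [max_eq_right h, max_eq_right (by linarith : 0 ≤ 1 - r * t - m)]
        rcases le_total (wid s) (1 - r * t - m) with h' | h'
        · rw [min_eq_left h', sub_self, ENNReal.ofReal_zero]
          exact ENNReal.ofReal_of_nonpos (by linarith)
        · rw [min_eq_right h', hw]
          congr 1
          ring
    · have hw : wid s ≤ 0 := by
        unfold wid
        by_contra! h
        rw [lt_min_iff] at h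
        exact hs ⟨h.1.le, by linarith⟩
      have hc : cut r s t = wid s := min_eq_left (hw.trans (le_max_left _ _))
      rw [hc, sub_self, ENNReal.ofReal_zero]
      apply ENNReal.ofReal_of_nonpos
      by_contra! h
      rw [sub_pos, lt_min_iff, max_lt_iff, max_lt_iff, max_lt_iff, max_lt_iff] at h
      exact hs ⟨by linarith, by linarith⟩
  · intro b hb
    simp only [Set.mem_Ioo, max_lt_iff, lt_min_iff] at hb
    simp only [refCell, Set.mem_ofPred_eq]
    refine ⟨⟨?_, ?_, ?_, ?_, ?_⟩, ?_⟩ <;> linarith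
  · intro b hb
    simp only [refCell, Set.mem_ofPred_eq] at hb
    simp only [Set.mem_Icc, max_le_iff, le_min_iff]
    refine ⟨⟨⟨?_, ?_⟩, ?_⟩, ?_, ?_⟩ <;> linarith

/-- The edge event when both points lie in the cell of the same vertex. -/
def sameEvent (r : ℝ) : Set ((ℝ × ℝ) × (ℝ × ℝ)) :=
  {q | q.1 ∈ refCell ∧ q.2 ∈ refCell ∧ q.2.1 ≤ r * q.1.1 ∧ q.1.1 ≤ r * q.2.1}

/-- The edge event when the points lie in the cells of two different vertices, each point being
written in the coordinates adapted to its own vertex and the vertex of the other point. -/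
def diffEvent (r : ℝ) : Set ((ℝ × ℝ) × (ℝ × ℝ)) :=
  {q | q.1 ∈ refCell ∧ q.2 ∈ refCell ∧ 1 - q.2.2 ≤ r * q.1.1 ∧ 1 - q.1.2 ≤ r * q.2.1}

lemma measurableSet_sameEvent (r : ℝ) : MeasurableSet (sameEvent r) := by
  have h := measurableSet_refCell
  have h1 : MeasurableSet {q : (ℝ × ℝ) × (ℝ × ℝ) | q.1 ∈ refCell} := measurable_fst h
  have h2 : MeasurableSet {q : (ℝ × ℝ) × (ℝ × ℝ) | q.2 ∈ refCell} := measurable_snd h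
  have h3 : MeasurableSet {q : (ℝ × ℝ) × (ℝ × ℝ) | q.2.1 ≤ r * q.1.1 ∧ q.1.1 ≤ r * q.2.1} := by
    measurability
  exact h1.inter (h2.inter h3)

lemma measurableSet_diffEvent (r : ℝ) : MeasurableSet (diffEvent r) := by
  have h := measurableSet_refCell
  have h1 : MeasurableSet {q : (ℝ × ℝ) × (ℝ × ℝ) | q.1 ∈ refCell} := measurable_fst h
  have h2 : MeasurableSet {q : (ℝ × ℝ) × (ℝ × ℝ) | q.2 ∈ refCell} := measurable_snd h
  have h3 : MeasurableSet
      {q : (ℝ × ℝ) × (ℝ × ℝ) | 1 - q.2.2 ≤ r * q.1.1 ∧ 1 - q.1.2 ≤ r * q.2.1} := by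
    measurability
  exact h1.inter (h2.inter h3)

lemma refCell_subset : refCell ⊆ refTri := fun _ h => ⟨h.1, h.2.1, h.2.2.1⟩

lemma wid_nonneg {s : ℝ} (h0 : 0 ≤ s) (h1 : s ≤ 2 / 3) : 0 ≤ wid s := le_min h0 (by linarith)

lemma wid_nonpos_of_notMem {s : ℝ} (hs : s ∉ Set.Ioc (0 : ℝ) (2 / 3)) : wid s ≤ 0 := by
  unfold wid
  by_contra! h
  rw [lt_min_iff] at h
  exact hs ⟨h.1, by linarith⟩

lemma lintegral_eq_interval {f : ℝ → ℝ} (hf : Continuous f) {a b : ℝ} (hab : a ≤ b)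
    (h0 : ∀ s ∈ Set.Ioc a b, 0 ≤ f s) :
    ∫⁻ s in Set.Ioc a b, ENNReal.ofReal (f s) = ENNReal.ofReal (∫ s in a..b, f s) := by
  rw [intervalIntegral.integral_of_le hab, ofReal_integral_eq_lintegral_ofReal]
  · exact hf.integrableOn_Icc.mono_set Set.Ioc_subset_Icc_self
  · filter_upwards [ae_restrict_mem measurableSet_Ioc] with s hs using h0 s hs

/-- Inclusion–exclusion over the two conditions that may fail. -/
lemma integral_diff (r : ℝ) :
    ∫ t in (0 : ℝ)..(2 / 3), ∫ s in (0 : ℝ)..(2 / 3), (wid s - cut r s t) * (wid t - cut r t s)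
      = 1 / 36 - 2 * oneFail r + bothFail r := by
  have c0 : Continuous (Function.uncurry fun t s : ℝ => wid t * wid s) := by
    have := continuous_wid
    unfold Function.uncurry; fun_prop
  have c1 : Continuous (Function.uncurry fun t s : ℝ => wid t * cut r s t) := by
    have := continuous_wid
    unfold Function.uncurry; fun_prop
  have c2 : Continuous (Function.uncurry fun t s : ℝ => wid s * cut r t s) := by
    have := continuous_wid
    unfold Function.uncurry; fun_prop
  have c3 : Continuous (Function.uncurry fun t s : ℝ => cut r t s * cut r s t) :=
    continuous_cutMul r
  have i {F : ℝ → ℝ → ℝ} (hF : Continuous (Function.uncurry F)) (t : ℝ) :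
      IntervalIntegrable (fun s => F t s) volume 0 (2 / 3) :=
    Continuous.intervalIntegrable (by fun_prop) _ _
  have j {F : ℝ → ℝ → ℝ} (hF : Continuous (Function.uncurry F)) :
      IntervalIntegrable (fun t => ∫ s in (0 : ℝ)..(2 / 3), F t s) volume 0 (2 / 3) :=
    (continuous_inner_const hF 0 (2 / 3)).intervalIntegrable _ _
  have e0 : ∫ t in (0 : ℝ)..(2 / 3), ∫ s in (0 : ℝ)..(2 / 3), wid t * wid s = 1 / 36 := by
    simp only [intervalIntegral.integral_const_mul, intervalIntegral.integral_mul_const,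
      integral_wid]
    norm_num
  have e1 : ∫ t in (0 : ℝ)..(2 / 3), ∫ s in (0 : ℝ)..(2 / 3), wid t * cut r s t = oneFail r := by
    simp only [intervalIntegral.integral_const_mul, oneFail]
  have e2 : ∫ t in (0 : ℝ)..(2 / 3), ∫ s in (0 : ℝ)..(2 / 3), wid s * cut r t s = oneFail r := by
    rw [integral_swap_of_continuous c2 (by norm_num)]
    exact e1
  have e3 : ∫ t in (0 : ℝ)..(2 / 3), ∫ s in (0 : ℝ)..(2 / 3), cut r t s * cut r s t
      = bothFail r := rfl
  have key : ∀ t : ℝ, ∫ s in (0 : ℝ)..(2 / 3), (wid s - cut r s t) * (wid t - cut r t s)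
      = (∫ s in (0 : ℝ)..(2 / 3), wid t * wid s) - (∫ s in (0 : ℝ)..(2 / 3), wid t * cut r s t)
        - (∫ s in (0 : ℝ)..(2 / 3), wid s * cut r t s)
        + ∫ s in (0 : ℝ)..(2 / 3), cut r t s * cut r s t := by
    intro t
    rw [← intervalIntegral.integral_sub (i c0 t) (i c1 t),
      ← intervalIntegral.integral_sub ((i c0 t).sub (i c1 t)) (i c2 t),
      ← intervalIntegral.integral_add (((i c0 t).sub (i c1 t)).sub (i c2 t)) (i c3 t)]
    congr 1
    funext s
    ring
  simp_rw [key]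
  rw [intervalIntegral.integral_add (((j c0).sub (j c1)).sub (j c2)) (j c3),
    intervalIntegral.integral_sub ((j c0).sub (j c1)) (j c2),
    intervalIntegral.integral_sub (j c0) (j c1), e0, e1, e2, e3]
  ring

lemma refUnif_diffEvent (r : ℝ) :
    (refUnif.prod refUnif) (diffEvent r)
      = ENNReal.ofReal (4 * (1 / 36 - 2 * oneFail r + bothFail r)) := by
  rw [refUnif_prod_apply (measurableSet_diffEvent r)
    fun q hq => ⟨refCell_subset hq.1, refCell_subset hq.2.1⟩]
  have hslice : ∀ s t : ℝ, volume {p : ℝ × ℝ | ((s, p.1), (t, p.2)) ∈ diffEvent r}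
      = ENNReal.ofReal ((wid s - cut r s t) * (wid t - cut r t s)) := by
    intro s t
    have : {p : ℝ × ℝ | ((s, p.1), (t, p.2)) ∈ diffEvent r}
        = {b : ℝ | (s, b) ∈ refCell ∧ 1 - b ≤ r * t} ×ˢ
          {c : ℝ | (t, c) ∈ refCell ∧ 1 - c ≤ r * s} := by
      ext p
      simp only [diffEvent, Set.mem_ofPred_eq, Set.mem_prod]
      tauto
    rw [this, Measure.volume_eq_prod, Measure.prod_prod, volume_refCell_slice_cut,
      volume_refCell_slice_cut, ENNReal.ofReal_mul (sub_nonneg.2 (cut_le_wid r s t))]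
  simp_rw [hslice]
  -- Both factors vanish off the square `(0, 2/3]²`, because `cut = wid` where `wid ≤ 0`.
  have hz : ∀ a b : ℝ, a ∉ Set.Ioc (0 : ℝ) (2 / 3) → wid a - cut r a b = 0 := fun a b ha =>
    sub_eq_zero.2 (min_eq_left ((wid_nonpos_of_notMem ha).trans (le_max_left _ _))).symm
  have hc : Continuous (Function.uncurry fun t s : ℝ =>
      (wid s - cut r s t) * (wid t - cut r t s)) := by
    have := continuous_wid
    unfold Function.uncurry; fun_prop
  have hpos : ∀ s t : ℝ, 0 ≤ (wid s - cut r s t) * (wid t - cut r t s) := fun s t =>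
    mul_nonneg (sub_nonneg.2 (cut_le_wid r s t)) (sub_nonneg.2 (cut_le_wid r t s))
  have hin : ∀ t : ℝ, ∫⁻ s : ℝ, ENNReal.ofReal ((wid s - cut r s t) * (wid t - cut r t s))
      = ENNReal.ofReal
        (∫ s in (0 : ℝ)..(2 / 3), (wid s - cut r s t) * (wid t - cut r t s)) := by
    intro t
    rw [← lintegral_eq_interval (by fun_prop) (by norm_num) fun s _ => hpos s t]
    symm
    apply setLIntegral_eq_of_support_subset
    intro s hs
    by_contra h
    exact hs (by simp [hz s t h])
  simp_rw [hin]
  have hout : ∫⁻ t : ℝ, ENNReal.ofReal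
        (∫ s in (0 : ℝ)..(2 / 3), (wid s - cut r s t) * (wid t - cut r t s))
      = ENNReal.ofReal (∫ t in (0 : ℝ)..(2 / 3),
        ∫ s in (0 : ℝ)..(2 / 3), (wid s - cut r s t) * (wid t - cut r t s)) := by
    rw [← lintegral_eq_interval (continuous_inner_const hc 0 (2 / 3)) (by norm_num)
      fun t _ => intervalIntegral.integral_nonneg (by norm_num) fun s _ => hpos s t]
    symm
    apply setLIntegral_eq_of_support_subset
    intro t ht
    by_contra h
    exact ht (by simp [hz t _ h])
  rw [hout, integral_diff, ENNReal.ofReal_mul (by norm_num), ENNReal.ofReal_ofNat]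

/-- Regularity, integral and sign of the weight of the heights `s ∈ [t/r, min(rt, 2/3)]`. -/
lemma tail_integrand {r : ℝ} (hr : 1 ≤ r) :
    Continuous (fun t : ℝ => (wid t * ∫ s in (0 : ℝ)..min (r * t) (2 / 3), wid s)
      - wid t * ∫ s in (0 : ℝ)..t / r, wid s) ∧
    (∫ t in (0 : ℝ)..(2 / 3), ((wid t * ∫ s in (0 : ℝ)..min (r * t) (2 / 3), wid s)
      - wid t * ∫ s in (0 : ℝ)..t / r, wid s)) = highTail r - lowTail r ∧
    ∀ t ∈ Set.Ioc (0 : ℝ) (2 / 3), 0 ≤ (wid t * ∫ s in (0 : ℝ)..min (r * t) (2 / 3), wid s)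
      - wid t * ∫ s in (0 : ℝ)..t / r, wid s := by
  have hr0 : 0 < r := by linarith
  have hcw := continuous_wid
  have hp := intervalIntegral.continuous_primitive (μ := volume)
    (fun a b => hcw.intervalIntegrable a b) 0
  have c1 : Continuous fun t : ℝ => wid t * ∫ s in (0 : ℝ)..min (r * t) (2 / 3), wid s :=
    hcw.mul (hp.comp (by fun_prop))
  have c2 : Continuous fun t : ℝ => wid t * ∫ s in (0 : ℝ)..t / r, wid s :=
    hcw.mul (hp.comp (by fun_prop))
  refine ⟨c1.sub c2, ?_, fun t ht => ?_⟩
  · rw [intervalIntegral.integral_sub (c1.intervalIntegrable _ _) (c2.intervalIntegrable _ _),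
      ← highTail, ← lowTail]
  · have htr : t / r ≤ t := div_le_self ht.1.le hr
    have hrt : t ≤ r * t := le_mul_of_one_le_left ht.1.le hr
    rw [← mul_sub, intervalIntegral.integral_interval_sub_left (hcw.intervalIntegrable _ _)
      (hcw.intervalIntegrable _ _)]
    exact mul_nonneg (wid_nonneg ht.1.le ht.2) (intervalIntegral.integral_nonneg
      (le_min (htr.trans hrt) (htr.trans ht.2)) fun s hs => wid_nonneg
        ((div_nonneg ht.1.le hr0.le).trans hs.1) (hs.2.trans (min_le_right _ _)))

lemma tails_nonneg {r : ℝ} (hr : 1 ≤ r) : 0 ≤ highTail r - lowTail r := by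
  obtain ⟨-, hint, hpos⟩ := tail_integrand hr
  rw [← hint, intervalIntegral.integral_of_le (by norm_num)]
  exact setIntegral_nonneg measurableSet_Ioc hpos

lemma fails_nonneg (r : ℝ) : 0 ≤ 1 / 36 - 2 * oneFail r + bothFail r := by
  rw [← integral_diff]
  exact intervalIntegral.integral_nonneg (by norm_num) fun t _ =>
    intervalIntegral.integral_nonneg (by norm_num) fun s _ =>
      mul_nonneg (sub_nonneg.2 (cut_le_wid r s t)) (sub_nonneg.2 (cut_le_wid r t s))

lemma refUnif_sameEvent {r : ℝ} (hr : 1 ≤ r) :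
    (refUnif.prod refUnif) (sameEvent r) = ENNReal.ofReal (4 * (highTail r - lowTail r)) := by
  rw [refUnif_prod_apply (measurableSet_sameEvent r)
    fun q hq => ⟨refCell_subset hq.1, refCell_subset hq.2.1⟩]
  have hr0 : 0 < r := by linarith
  have hcw := continuous_wid
  have hslice : ∀ s t : ℝ, volume {p : ℝ × ℝ | ((s, p.1), (t, p.2)) ∈ sameEvent r}
      = {s : ℝ | t ≤ r * s ∧ s ≤ r * t}.indicator
        (fun s => ENNReal.ofReal (wid t) * ENNReal.ofReal (wid s)) s := by
    intro s t
    by_cases h : t ≤ r * s ∧ s ≤ r * t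
    · have : {p : ℝ × ℝ | ((s, p.1), (t, p.2)) ∈ sameEvent r}
          = {b : ℝ | (s, b) ∈ refCell} ×ˢ {c : ℝ | (t, c) ∈ refCell} := by
        ext p
        simp only [sameEvent, Set.mem_ofPred_eq, Set.mem_prod]
        tauto
      rw [this, Measure.volume_eq_prod, Measure.prod_prod, volume_refCell_slice,
        volume_refCell_slice, Set.indicator_of_mem (by exact h), mul_comm]
    · have : {p : ℝ × ℝ | ((s, p.1), (t, p.2)) ∈ sameEvent r} = ∅ := by
        ext p
        simp only [sameEvent, Set.mem_ofPred_eq, Set.mem_empty_iff_false]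
        tauto
      rw [this, measure_empty, Set.indicator_of_notMem (by exact h)]
  simp_rw [hslice]
  have hin : ∀ t : ℝ, ∫⁻ s : ℝ, {s : ℝ | t ≤ r * s ∧ s ≤ r * t}.indicator
        (fun s => ENNReal.ofReal (wid t) * ENNReal.ofReal (wid s)) s
      = (Set.Ioc (0 : ℝ) (2 / 3)).indicator (fun t => ENNReal.ofReal
        (wid t * (∫ s in (0 : ℝ)..min (r * t) (2 / 3), wid s)
          - wid t * ∫ s in (0 : ℝ)..t / r, wid s)) t := by
    intro t
    by_cases ht : t ∈ Set.Ioc (0 : ℝ) (2 / 3)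
    · have htr : t / r ≤ t := div_le_self ht.1.le hr
      have hrt : t ≤ r * t := le_mul_of_one_le_left ht.1.le hr
      have hle : t / r ≤ min (r * t) (2 / 3) :=
        le_min (htr.trans hrt) (htr.trans ht.2)
      have h0 : 0 ≤ t / r := div_nonneg ht.1.le hr0.le
      have hset : {s : ℝ | t ≤ r * s ∧ s ≤ r * t} = Set.Icc (t / r) (r * t) := by
        ext s
        simp only [Set.mem_ofPred_eq, Set.mem_Icc, div_le_iff₀ hr0, mul_comm s r]
      rw [Set.indicator_of_mem ht, hset, lintegral_indicator measurableSet_Icc,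
        lintegral_const_mul _ (by fun_prop), ← mul_sub, ENNReal.ofReal_mul
        (wid_nonneg ht.1.le ht.2)]
      congr 1
      rw [intervalIntegral.integral_interval_sub_left (hcw.intervalIntegrable _ _)
        (hcw.intervalIntegrable _ _), ← lintegral_eq_interval hcw hle
        (fun s hs => wid_nonneg (h0.trans hs.1.le) (hs.2.trans (min_le_right _ _)))]
      rw [← setLIntegral_congr Ioc_ae_eq_Icc, ← lintegral_indicator measurableSet_Ioc,
        ← lintegral_indicator measurableSet_Ioc]
      refine lintegral_congr fun s => ?_
      by_cases h1 : s ∈ Set.Ioc (t / r) (min (r * t) (2 / 3))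
      · have h2 : s ∈ Set.Ioc (t / r) (r * t) := ⟨h1.1, h1.2.trans (min_le_left _ _)⟩
        rw [Set.indicator_of_mem h1, Set.indicator_of_mem h2]
      · rw [Set.indicator_of_notMem h1]
        by_cases h2 : s ∈ Set.Ioc (t / r) (r * t)
        · rw [Set.indicator_of_mem h2]
          apply ENNReal.ofReal_of_nonpos
          exact wid_nonpos_of_notMem fun h3 => h1 ⟨h2.1, le_min h2.2 h3.2⟩
        · rw [Set.indicator_of_notMem h2]
    · rw [Set.indicator_of_notMem ht]
      simp [ENNReal.ofReal_of_nonpos (wid_nonpos_of_notMem ht)]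
  simp_rw [hin]
  rw [lintegral_indicator measurableSet_Ioc]
  obtain ⟨hc, hint, hpos⟩ := tail_integrand hr
  rw [lintegral_eq_interval hc (by norm_num) hpos, hint, ENNReal.ofReal_mul (by norm_num),
    ENNReal.ofReal_ofNat]

/-! ### Barycentric coordinates and the uniform distribution -/

/-- Twice the signed area of the triangle. -/
def area2 (y : Fin 3 → ℝ × ℝ) : ℝ := det2 (y 0 - y 1) (y 2 - y 1)

lemma area2_ne_zero {y : Fin 3 → ℝ × ℝ}
    (hy : ¬ Collinear ℝ ({y 0, y 1, y 2} : Set (ℝ × ℝ))) : area2 y ≠ 0 := by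
  contrapose! hy
  rw [collinear_iff_of_mem (p₀ := y 1) (by simp)]
  simp only [area2, det2, Prod.fst_sub, Prod.snd_sub] at hy
  by_cases h1 : (y 2).1 - (y 1).1 = 0
  · by_cases h2 : (y 2).2 - (y 1).2 = 0
    · refine ⟨y 0 - y 1, ?_⟩
      simp only [Set.mem_insert_iff, Set.mem_singleton_iff, forall_eq_or_imp, forall_eq]
      refine ⟨⟨1, by simp⟩, ⟨0, by simp⟩, ⟨0, ?_⟩⟩
      simp only [zero_smul, zero_vadd]
      ext <;> linarith
    · refine ⟨y 2 - y 1, ?_⟩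
      simp only [Set.mem_insert_iff, Set.mem_singleton_iff, forall_eq_or_imp, forall_eq]
      refine ⟨⟨((y 0).2 - (y 1).2) / ((y 2).2 - (y 1).2), ?_⟩, ⟨0, by simp⟩, ⟨1, by simp⟩⟩
      ext
      · simp
        field_simp
        linarith
      · simp
        field_simp
        ring
  · refine ⟨y 2 - y 1, ?_⟩
    simp only [Set.mem_insert_iff, Set.mem_singleton_iff, forall_eq_or_imp, forall_eq]
    refine ⟨⟨((y 0).1 - (y 1).1) / ((y 2).1 - (y 1).1), ?_⟩, ⟨0, by simp⟩, ⟨1, by simp⟩⟩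
    ext
    · simp
      field_simp
      ring
    · simp
      field_simp
      linarith

lemma bary_zero (y : Fin 3 → ℝ × ℝ) (z : ℝ × ℝ) :
    bary y 0 z = ((z.1 - (y 1).1) * ((y 2).2 - (y 1).2)
      - (z.2 - (y 1).2) * ((y 2).1 - (y 1).1)) / area2 y := rfl

lemma bary_one (y : Fin 3 → ℝ × ℝ) (z : ℝ × ℝ) :
    bary y 1 z = ((z.1 - (y 2).1) * ((y 0).2 - (y 2).2)
      - (z.2 - (y 2).2) * ((y 0).1 - (y 2).1)) / area2 y := by
  have : area2 y = det2 (y 1 - y 2) (y 0 - y 2) := by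
    simp only [area2, det2, Prod.fst_sub, Prod.snd_sub]; ring
  rw [this]
  rfl

lemma bary_two (y : Fin 3 → ℝ × ℝ) (z : ℝ × ℝ) :
    bary y 2 z = ((z.1 - (y 0).1) * ((y 1).2 - (y 0).2)
      - (z.2 - (y 0).2) * ((y 1).1 - (y 0).1)) / area2 y := by
  have : area2 y = det2 (y 2 - y 0) (y 1 - y 0) := by
    simp only [area2, det2, Prod.fst_sub, Prod.snd_sub]; ring
  rw [this]
  rfl

lemma area2_eq (y : Fin 3 → ℝ × ℝ) : area2 y
    = ((y 0).1 - (y 1).1) * ((y 2).2 - (y 1).2) - ((y 0).2 - (y 1).2) * ((y 2).1 - (y 1).1) := rfl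

lemma bary_sum {y : Fin 3 → ℝ × ℝ} (hD : area2 y ≠ 0) (z : ℝ × ℝ) :
    bary y 0 z + bary y 1 z + bary y 2 z = 1 := by
  rw [bary_zero, bary_one, bary_two, ← add_div, ← add_div, div_eq_one_iff_eq hD, area2_eq]
  ring

lemma bary_combo {y : Fin 3 → ℝ × ℝ} (hD : area2 y ≠ 0) (z : ℝ × ℝ) :
    z = bary y 0 z • y 0 + bary y 1 z • y 1 + bary y 2 z • y 2 := by
  rw [bary_zero, bary_one, bary_two]
  ext
  · simp only [Prod.fst_add, Prod.smul_fst, smul_eq_mul]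
    field_simp
    rw [area2_eq]
    ring
  · simp only [Prod.snd_add, Prod.smul_snd, smul_eq_mul]
    field_simp
    rw [area2_eq]
    ring

/-- Barycentric coordinates are affine functions. -/
lemma bary_affine (y : Fin 3 → ℝ × ℝ) (i : Fin 3) (u v : ℝ × ℝ) {a b : ℝ} (hab : a + b = 1) :
    bary y i (a • u + b • v) = a * bary y i u + b * bary y i v := by
  have hb : b = 1 - a := by linarith
  subst hb
  simp only [bary, det2, Prod.fst_sub, Prod.snd_sub, Prod.fst_add, Prod.snd_add, Prod.smul_fst,
    Prod.smul_snd, smul_eq_mul]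
  ring

lemma bary_vertex {y : Fin 3 → ℝ × ℝ} (hD : area2 y ≠ 0) (i j : Fin 3) :
    bary y i (y j) = if i = j then 1 else 0 := by
  have h := area2_eq y
  fin_cases i <;> fin_cases j <;>
    simp only [Fin.zero_eta, Fin.mk_one, Fin.reduceFinMk, bary_zero, bary_one, bary_two] <;>
    first
    | (rw [if_pos (by trivial), div_eq_one_iff_eq hD]; linear_combination -h)
    | (rw [if_neg (by decide), div_eq_zero_iff]; left; ring1)

lemma measurable_bary (y : Fin 3 → ℝ × ℝ) (i : Fin 3) : Measurable (bary y i) := by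
  unfold bary det2
  simp only [Prod.fst_sub, Prod.snd_sub]
  fun_prop

lemma convex_bary_ge (y : Fin 3 → ℝ × ℝ) (i : Fin 3) (c : ℝ) : Convex ℝ {z | c ≤ bary y i z} := by
  intro u hu v hv a b ha hb hab
  simp only [Set.mem_ofPred_eq] at *
  rw [bary_affine y i u v hab]
  have hc : c = a * c + b * c := by rw [← add_mul, hab, one_mul]
  linarith [mul_le_mul_of_nonneg_left hu ha, mul_le_mul_of_nonneg_left hv hb]

lemma mem_triangle_iff {y : Fin 3 → ℝ × ℝ} (hD : area2 y ≠ 0) (z : ℝ × ℝ) :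
    z ∈ triangle y ↔ ∀ i, 0 ≤ bary y i z := by
  constructor
  · intro hz i
    refine convexHull_min ?_ (convex_bary_ge y i 0) hz
    rintro w (rfl | rfl | rfl) <;> simp only [Set.mem_ofPred_eq, bary_vertex hD] <;>
      split_ifs <;> norm_num
  · intro h
    rw [bary_combo hD z, triangle]
    have hc := convex_convexHull ℝ ({y 0, y 1, y 2} : Set (ℝ × ℝ))
    have hs := bary_sum hD z
    have := hc.sum_mem (t := Finset.univ) (w := fun i : Fin 3 => bary y i z) (z := y)
      (fun i _ => h i) (by rw [Fin.sum_univ_three]; exact hs)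
      (fun i _ => subset_convexHull ℝ _ (by fin_cases i <;> simp))
    rwa [Fin.sum_univ_three] at this

/-- An invertible affine map rescales planar Lebesgue measure. -/
lemma map_affine_volume {a b c d : ℝ} (e f : ℝ) (h : a * d - b * c ≠ 0) :
    (volume : Measure (ℝ × ℝ)).map (fun z => (a * z.1 + b * z.2 + e, c * z.1 + d * z.2 + f))
      = ENNReal.ofReal |(a * d - b * c)⁻¹| • volume := by
  set L := Matrix.toLin (Module.Basis.finTwoProd ℝ) (Module.Basis.finTwoProd ℝ) !![a, b; c, d]
    with hL
  have hdet : LinearMap.det L = a * d - b * c := by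
    rw [hL, LinearMap.det_toLin, Matrix.det_fin_two_of]
  have hmL : Measurable L := L.continuous_of_finiteDimensional.measurable
  have h1 := Measure.map_linearMap_addHaar_eq_smul_addHaar (volume : Measure (ℝ × ℝ))
    (f := L) (by rw [hdet]; exact h)
  have h2 : (fun z : ℝ × ℝ => (a * z.1 + b * z.2 + e, c * z.1 + d * z.2 + f))
      = (fun w : ℝ × ℝ => w + (e, f)) ∘ L := by
    funext z
    simp [hL, Matrix.toLin_finTwoProd_apply]
  rw [h2, ← Measure.map_map (by fun_prop) hmL, h1, Measure.map_smul, map_add_right_eq_self, hdet]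

/-- The coordinates of a point adapted to the vertex `i`: the distance `1 - bᵢ` from the vertex
and the coordinate with respect to a second vertex `j`. -/
def coord (y : Fin 3 → ℝ × ℝ) (i j : Fin 3) (z : ℝ × ℝ) : ℝ × ℝ := (1 - bary y i z, bary y j z)

lemma measurable_coord (y : Fin 3 → ℝ × ℝ) (i j : Fin 3) : Measurable (coord y i j) :=
  (measurable_const.sub (measurable_bary y i)).prodMk (measurable_bary y j)

lemma map_coord_volume {y : Fin 3 → ℝ × ℝ} (hD : area2 y ≠ 0) {i j : Fin 3} (hij : i ≠ j) :
    ∃ k : ENNReal, k ≠ 0 ∧ k ≠ ⊤ ∧ (volume : Measure (ℝ × ℝ)).map (coord y i j) = k • volume := by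
  have key : ∀ a b c d e f : ℝ, a * d - b * c ≠ 0 →
      (∀ z : ℝ × ℝ, coord y i j z = (a * z.1 + b * z.2 + e, c * z.1 + d * z.2 + f)) →
      ∃ k : ENNReal, k ≠ 0 ∧ k ≠ ⊤ ∧
        (volume : Measure (ℝ × ℝ)).map (coord y i j) = k • volume := by
    intro a b c d e f h hz
    refine ⟨_, ?_, ENNReal.ofReal_ne_top, (funext hz ▸ map_affine_volume e f h)⟩
    rw [Ne, ENNReal.ofReal_eq_zero, not_le]
    exact abs_pos.2 (inv_ne_zero h)
  have hlin : ∀ (l : Fin 3) (z : ℝ × ℝ), bary y l z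
      = ((y (l + 2)).2 - (y (l + 1)).2) / area2 y * z.1
        + (-((y (l + 2)).1 - (y (l + 1)).1) / area2 y) * z.2 + bary y l 0 := by
    intro l z
    fin_cases l
    · change bary y 0 z = ((y 2).2 - (y 1).2) / area2 y * z.1
        + (-((y 2).1 - (y 1).1) / area2 y) * z.2 + bary y 0 0
      simp only [bary_zero, Prod.fst_zero, Prod.snd_zero]; ring
    · change bary y 1 z = ((y 0).2 - (y 2).2) / area2 y * z.1
        + (-((y 0).1 - (y 2).1) / area2 y) * z.2 + bary y 1 0
      simp only [bary_one, Prod.fst_zero, Prod.snd_zero]; ring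
    · change bary y 2 z = ((y 1).2 - (y 0).2) / area2 y * z.1
        + (-((y 1).1 - (y 0).1) / area2 y) * z.2 + bary y 2 0
      simp only [bary_two, Prod.fst_zero, Prod.snd_zero]; ring
  refine key (-(((y (i + 2)).2 - (y (i + 1)).2) / area2 y))
    (-(-((y (i + 2)).1 - (y (i + 1)).1) / area2 y)) (((y (j + 2)).2 - (y (j + 1)).2) / area2 y)
    (-((y (j + 2)).1 - (y (j + 1)).1) / area2 y) (1 - bary y i 0) (bary y j 0) ?_ ?_
  · have h3 : -(((y (i + 2)).2 - (y (i + 1)).2) / area2 y)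
          * (-((y (j + 2)).1 - (y (j + 1)).1) / area2 y)
        - -(-((y (i + 2)).1 - (y (i + 1)).1) / area2 y)
          * (((y (j + 2)).2 - (y (j + 1)).2) / area2 y)
        = -det2 (y (i + 2) - y (i + 1)) (y (j + 2) - y (j + 1)) / area2 y ^ 2 := by
      simp only [det2, Prod.fst_sub, Prod.snd_sub]
      ring
    have h4 : det2 (y (i + 2) - y (i + 1)) (y (j + 2) - y (j + 1)) = area2 y ∨
        det2 (y (i + 2) - y (i + 1)) (y (j + 2) - y (j + 1)) = -area2 y := by
      revert hij
      have e : (1 : Fin 3) + 2 = 0 ∧ (2 : Fin 3) + 2 = 1 ∧ (1 : Fin 3) + 1 = 2 ∧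
        (2 : Fin 3) + 1 = 0 ∧ (0 : Fin 3) + 1 = 1 ∧ (0 : Fin 3) + 2 = 2 := by decide
      obtain ⟨e1, e2, e3, e4, e5, e6⟩ := e
      fin_cases i <;> fin_cases j <;>
        simp only [Fin.zero_eta, Fin.mk_one, Fin.reduceFinMk, e1, e2, e3, e4, e5, e6, area2_eq,
          det2, Prod.fst_sub, Prod.snd_sub] <;> intro hij <;>
        first
        | exact absurd rfl hij
        | (left; ring1)
        | (right; ring1)
    rw [h3]
    refine div_ne_zero (neg_ne_zero.2 ?_) (pow_ne_zero 2 hD)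
    rcases h4 with h | h <;> rw [h]
    · exact hD
    · exact neg_ne_zero.2 hD
  · intro z
    rw [coord, hlin i z, hlin j z]
    ext
    · simp only; ring
    · rfl

/-- For three distinct indices the three barycentric coordinates add up to one. -/
lemma bary_third {y : Fin 3 → ℝ × ℝ} (hD : area2 y ≠ 0) {i j k : Fin 3} (hij : i ≠ j)
    (hik : i ≠ k) (hjk : j ≠ k) (z : ℝ × ℝ) : bary y k z = 1 - bary y i z - bary y j z := by
  have h := bary_sum hD z
  revert hij hik hjk
  fin_cases i <;> fin_cases j <;> fin_cases k <;>
    simp only [Fin.zero_eta, Fin.mk_one, Fin.reduceFinMk] <;> intro h1 h2 h3 <;>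
    first
    | exact absurd rfl h1
    | exact absurd rfl h2
    | exact absurd rfl h3
    | linarith

lemma exists_third : ∀ {i j : Fin 3}, i ≠ j →
    ∃ k, i ≠ k ∧ j ≠ k ∧ ∀ l, l = i ∨ l = j ∨ l = k := by decide

lemma coord_preimage_refTri {y : Fin 3 → ℝ × ℝ} (hD : area2 y ≠ 0) {i j : Fin 3} (hij : i ≠ j) :
    coord y i j ⁻¹' refTri = triangle y := by
  obtain ⟨k, hik, hjk, hall⟩ := exists_third hij
  ext z
  have h3 := bary_third hD hij hik hjk z
  rw [mem_triangle_iff hD]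
  simp only [Set.mem_preimage, refTri, coord, Set.mem_ofPred_eq]
  constructor
  · rintro ⟨h0, h1, h2⟩ l
    rcases hall l with rfl | rfl | rfl <;> linarith
  · intro h
    have := h i
    have := h j
    have := h k
    refine ⟨?_, ?_, ?_⟩ <;> linarith

/-- In adapted coordinates the uniform distribution does not depend on the triangle, nor on the
choice of the two vertices. -/
lemma map_coord_unif {y : Fin 3 → ℝ × ℝ} (hD : area2 y ≠ 0) {i j : Fin 3} (hij : i ≠ j) :
    (unif y).map (coord y i j) = refUnif := by
  obtain ⟨k, hk0, hkt, hk⟩ := map_coord_volume hD hij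
  have hm := measurable_coord y i j
  have hv : volume (triangle y) = k * ENNReal.ofReal (1 / 2) := by
    rw [← coord_preimage_refTri hD hij, ← Measure.map_apply hm measurableSet_refTri, hk,
      Measure.smul_apply, volume_refTri, smul_eq_mul]
  rw [unif, Measure.map_smul, hv, ← coord_preimage_refTri hD hij,
    ← Measure.restrict_map hm measurableSet_refTri, hk, Measure.restrict_smul, refUnif, smul_smul]
  congr 1
  have h2 : ENNReal.ofReal (1 / 2) = (2 : ENNReal)⁻¹ := by
    rw [one_div, ENNReal.ofReal_inv_of_pos (by norm_num), ENNReal.ofReal_ofNat]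
  rw [h2, ENNReal.mul_inv (Or.inl hk0) (Or.inl hkt), inv_inv, mul_right_comm,
    ENNReal.inv_mul_cancel hk0 hkt, one_mul]

/-! ### Vertex regions -/

/-- The points of the triangle whose `i`-th barycentric coordinate is strictly the largest. -/
def cell (y : Fin 3 → ℝ × ℝ) (i : Fin 3) : Set (ℝ × ℝ) :=
  {x | x ∈ triangle y ∧ ∀ l, l ≠ i → bary y l x < bary y i x}

lemma coord_mem_refCell {y : Fin 3 → ℝ × ℝ} (hD : area2 y ≠ 0) {i j : Fin 3} (hij : i ≠ j)
    (z : ℝ × ℝ) : coord y i j z ∈ refCell ↔ z ∈ cell y i := by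
  obtain ⟨k, hik, hjk, hall⟩ := exists_third hij
  have h3 := bary_third hD hij hik hjk z
  have hT : z ∈ triangle y ↔ coord y i j z ∈ refTri := by
    rw [← coord_preimage_refTri hD hij]; rfl
  rw [cell, Set.mem_ofPred_eq, hT]
  simp only [refCell, refTri, coord, Set.mem_ofPred_eq]
  constructor
  · rintro ⟨h0, h1, h2, h4, h5⟩
    refine ⟨⟨h0, h1, h2⟩, fun l hl => ?_⟩
    rcases hall l with rfl | rfl | rfl
    · exact absurd rfl hl
    · linarith
    · linarith
  · rintro ⟨⟨h0, h1, h2⟩, h⟩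
    have hj := h j hij.symm
    have hk := h k hik.symm
    exact ⟨h0, h1, h2, by linarith, by linarith⟩

lemma convex_bary_le (y : Fin 3 → ℝ × ℝ) (l i : Fin 3) :
    Convex ℝ {z | bary y l z ≤ bary y i z} := by
  intro u hu v hv a b ha hb hab
  simp only [Set.mem_ofPred_eq] at *
  rw [bary_affine y i u v hab, bary_affine y l u v hab]
  linarith [mul_le_mul_of_nonneg_left hu ha, mul_le_mul_of_nonneg_left hv hb]

lemma midpoint_eq_combo (u v : ℝ × ℝ) :
    midpoint ℝ u v = (1 / 2 : ℝ) • u + (1 / 2 : ℝ) • v := by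
  rw [midpoint_eq_smul_add, invOf_eq_inv, smul_add, one_div]

lemma centroid_eq_combo (u v w : ℝ × ℝ) :
    (3 : ℝ)⁻¹ • (u + v + w)
      = (2 / 3 : ℝ) • ((1 / 2 : ℝ) • u + (1 / 2 : ℝ) • v) + (1 / 3 : ℝ) • w := by
  module

/-- On `R(yᵢ)` the `i`-th barycentric coordinate is the largest. -/
lemma bary_le_of_mem_vertexRegion {y : Fin 3 → ℝ × ℝ} (hD : area2 y ≠ 0) {i : Fin 3}
    {x : ℝ × ℝ} (hx : x ∈ vertexRegion y i) (l : Fin 3) : bary y l x ≤ bary y i x := by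
  refine convexHull_min ?_ (convex_bary_le y l i) hx
  have hne : i ≠ i + 1 ∧ i ≠ i + 2 := by clear hx; revert i; decide
  rintro w (rfl | rfl | rfl | rfl)
  · simp only [Set.mem_ofPred_eq, bary_vertex hD]
    split_ifs <;> norm_num
  · simp only [Set.mem_ofPred_eq, midpoint_eq_combo,
      bary_affine y _ _ _ (by norm_num : (1 / 2 : ℝ) + 1 / 2 = 1), bary_vertex hD, if_neg hne.1]
    split_ifs with h1 h2
    · exact absurd (h1.symm.trans h2) hne.1
    all_goals norm_num
  · simp only [Set.mem_ofPred_eq, midpoint_eq_combo,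
      bary_affine y _ _ _ (by norm_num : (1 / 2 : ℝ) + 1 / 2 = 1), bary_vertex hD, if_neg hne.2]
    split_ifs with h1 h2
    · exact absurd (h1.symm.trans h2) hne.2
    all_goals norm_num
  · have : ∀ m : Fin 3, bary y m ((3 : ℝ)⁻¹ • (y 0 + y 1 + y 2)) = 1 / 3 := by
      intro m
      rw [centroid_eq_combo, bary_affine y _ _ _ (by norm_num), bary_affine y _ _ _ (by norm_num)]
      simp only [bary_vertex hD]
      fin_cases m <;> simp <;> norm_num
    simp only [Set.mem_ofPred_eq, this, le_refl]

/-- A convex combination in which `u` has the largest weight lies in the quadrilateral at `u`: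
the explicit weights on its corners are `a - max b c`, `2 (b - min b c)`, `2 (c - min b c)` and
`3 min b c`. -/
lemma mem_quad (u v w : ℝ × ℝ) {a b c : ℝ} (hb : 0 ≤ b) (hc : 0 ≤ c) (hab : b ≤ a)
    (hac : c ≤ a) (hs : a + b + c = 1) :
    a • u + b • v + c • w ∈ convexHull ℝ
      {u, midpoint ℝ u v, midpoint ℝ u w, (3 : ℝ)⁻¹ • (u + v + w)} := by
  have hcx := convex_convexHull ℝ
    ({u, midpoint ℝ u v, midpoint ℝ u w, (3 : ℝ)⁻¹ • (u + v + w)} : Set (ℝ × ℝ))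
  have hmm := min_add_max b c
  have h := hcx.sum_mem (t := Finset.univ)
    (w := ![a - max b c, 2 * (b - min b c), 2 * (c - min b c), 3 * min b c])
    (z := ![u, midpoint ℝ u v, midpoint ℝ u w, (3 : ℝ)⁻¹ • (u + v + w)]) ?_ ?_ ?_
  · convert h using 1
    rw [Fin.sum_univ_four]
    simp only [Matrix.cons_val, midpoint_eq_combo]
    have e : max b c = b + c - min b c := by linarith
    rw [e]
    module
  · intro i _
    have h1 := min_le_left b c
    have h2 := min_le_right b c
    have h3 := max_le hab hac
    have h4 := le_min hb hc
    fin_cases i <;> simp only [Fin.zero_eta, Fin.mk_one, Fin.reduceFinMk, Matrix.cons_val] <;>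
      linarith
  · rw [Fin.sum_univ_four]
    simp only [Matrix.cons_val]
    linarith
  · intro i _
    apply subset_convexHull ℝ
    fin_cases i <;> simp

lemma mem_vertexRegion_of_mem_cell {y : Fin 3 → ℝ × ℝ} (hD : area2 y ≠ 0) {i : Fin 3}
    {x : ℝ × ℝ} (hx : x ∈ cell y i) : x ∈ vertexRegion y i := by
  obtain ⟨hT, hlt⟩ := hx
  rw [mem_triangle_iff hD] at hT
  have hs := bary_sum hD x
  have hx := bary_combo hD x
  fin_cases i
  · have h := mem_quad (y 0) (y 1) (y 2) (a := bary y 0 x) (hT 1) (hT 2)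
      (hlt 1 (by decide)).le (hlt 2 (by decide)).le hs
    rw [← hx] at h
    exact h
  · have h := mem_quad (y 1) (y 2) (y 0) (a := bary y 1 x) (hT 2) (hT 0)
      (hlt 2 (by decide)).le (hlt 0 (by decide)).le (by linarith)
    have e1 : bary y 1 x • y 1 + bary y 2 x • y 2 + bary y 0 x • y 0 = x := by
      rw [add_comm, ← add_assoc]; exact hx.symm
    have e2 : y 1 + y 2 + y 0 = y 0 + y 1 + y 2 := by abel
    rw [e1, e2] at h
    exact h
  · have h := mem_quad (y 2) (y 0) (y 1) (a := bary y 2 x) (hT 0) (hT 1)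
      (hlt 0 (by decide)).le (hlt 1 (by decide)).le (by linarith)
    have e1 : bary y 2 x • y 2 + bary y 0 x • y 0 + bary y 1 x • y 1 = x := by
      rw [add_assoc, add_comm]; exact hx.symm
    have e2 : y 2 + y 0 + y 1 = y 0 + y 1 + y 2 := by abel
    rw [e1, e2] at h
    exact h

lemma vtx_of_mem_cell {y : Fin 3 → ℝ × ℝ} (hD : area2 y ≠ 0) {i : Fin 3} {x : ℝ × ℝ}
    (hx : x ∈ cell y i) : vtx y x = i := by
  have hin := mem_vertexRegion_of_mem_cell hD hx
  have hout : ∀ l, l ≠ i → x ∉ vertexRegion y l := fun l hl hxl =>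
    absurd (bary_le_of_mem_vertexRegion hD hxl i) (not_le.2 (hx.2 l hl))
  unfold vtx
  fin_cases i
  · exact if_pos hin
  · exact (if_neg (hout 0 (by decide))).trans (if_pos hin)
  · exact (if_neg (hout 0 (by decide))).trans (if_neg (hout 1 (by decide)))

/-! ### The edge event -/

lemma measurableSet_triangle {y : Fin 3 → ℝ × ℝ} (hD : area2 y ≠ 0) : MeasurableSet (triangle y) := by
  rw [← coord_preimage_refTri hD (by decide : (0 : Fin 3) ≠ 1)]
  exact measurable_coord y 0 1 measurableSet_refTri

instance (y : Fin 3 → ℝ × ℝ) : SFinite (unif y) := by unfold unif; infer_instance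

lemma refUnif_tie : refUnif {p : ℝ × ℝ | 1 - p.1 = p.2} = 0 := by
  rw [refUnif, Measure.smul_apply, smul_eq_mul, mul_eq_zero]
  right
  refine Measure.absolutelyContinuous_of_le Measure.restrict_le_self ?_
  have hm : MeasurableSet {p : ℝ × ℝ | 1 - p.1 = p.2} :=
    measurableSet_eq_fun (by fun_prop) (by fun_prop)
  rw [Measure.volume_eq_prod, Measure.measure_prod_null hm]
  refine Filter.Eventually.of_forall fun s => ?_
  have : Prod.mk s ⁻¹' {p : ℝ × ℝ | 1 - p.1 = p.2} = {1 - s} := by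
    ext b
    simp only [Set.mem_preimage, Set.mem_ofPred_eq, Set.mem_singleton_iff]
    exact eq_comm
  change volume (Prod.mk s ⁻¹' {p : ℝ × ℝ | 1 - p.1 = p.2}) = 0
  rw [this]
  exact Real.volume_singleton

/-- Almost every point lies in one of the open cells and so is not a vertex either. -/
lemma ae_mem_cell {y : Fin 3 → ℝ × ℝ} (hD : area2 y ≠ 0) :
    ∀ᵐ x ∂unif y, (∃ i, x ∈ cell y i) ∧ ¬ (x = y 0 ∨ x = y 1 ∨ x = y 2) := by
  have hT : ∀ᵐ x ∂unif y, x ∈ triangle y :=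
    Measure.ae_smul_measure (ae_restrict_mem (measurableSet_triangle hD)) _
  have htie : ∀ i j : Fin 3, i ≠ j → ∀ᵐ x ∂unif y, bary y i x ≠ bary y j x := by
    intro i j hij
    have h := refUnif_tie
    rw [← map_coord_unif hD hij, Measure.map_apply (measurable_coord y i j)
      (measurableSet_eq_fun (by fun_prop) (by fun_prop))] at h
    rw [ae_iff]
    convert h using 2
    ext x
    simp only [coord, Set.mem_preimage, Set.mem_ofPred_eq, not_not, sub_sub_cancel]
  filter_upwards [hT, htie 0 1 (by decide), htie 0 2 (by decide), htie 1 2 (by decide)]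
    with x hx h01 h02 h12
  refine ⟨?_, ?_⟩
  · have all : ∀ {P : Fin 3 → Prop}, P 0 → P 1 → P 2 → ∀ l, P l := by
      intro P p0 p1 p2 l
      fin_cases l
      exacts [p0, p1, p2]
    rcases lt_or_gt_of_ne h01 with h | h
    · rcases lt_or_gt_of_ne h12 with h' | h'
      · exact ⟨2, hx, all (fun _ => h.trans h') (fun _ => h') (fun e => absurd rfl e)⟩
      · exact ⟨1, hx, all (fun _ => h) (fun e => absurd rfl e) (fun _ => h')⟩
    · rcases lt_or_gt_of_ne h02 with h' | h'
      · exact ⟨2, hx, all (fun _ => h') (fun _ => h.trans h') (fun e => absurd rfl e)⟩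
      · exact ⟨0, hx, all (fun e => absurd rfl e) (fun _ => h) (fun _ => h')⟩
  · rintro (rfl | rfl | rfl)
    · exact h12 (by simp [bary_vertex hD])
    · exact h02 (by simp [bary_vertex hD])
    · exact h01 (by simp [bary_vertex hD])

/-- The pairs joined by an edge, the first point in the cell of `i`, the second in that of `j`. -/
def edgeEvent (y : Fin 3 → ℝ × ℝ) (r : ℝ) (i j : Fin 3) : Set ((ℝ × ℝ) × (ℝ × ℝ)) :=
  {q | q.1 ∈ cell y i ∧ q.2 ∈ cell y j ∧ 1 - bary y i q.2 ≤ r * (1 - bary y i q.1) ∧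
    1 - bary y j q.1 ≤ r * (1 - bary y j q.2)}

lemma edgeEvent_same {y : Fin 3 → ℝ × ℝ} (hD : area2 y ≠ 0) (r : ℝ) {i j : Fin 3} (hij : i ≠ j) :
    edgeEvent y r i i = Prod.map (coord y i j) (coord y i j) ⁻¹' sameEvent r := by
  ext q
  simp only [edgeEvent, sameEvent, Set.mem_preimage, Set.mem_ofPred_eq, Prod.map_fst,
    Prod.map_snd, coord_mem_refCell hD hij]
  rfl

lemma edgeEvent_diff {y : Fin 3 → ℝ × ℝ} (hD : area2 y ≠ 0) (r : ℝ) {i j : Fin 3} (hij : i ≠ j) :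
    edgeEvent y r i j = Prod.map (coord y i j) (coord y j i) ⁻¹' diffEvent r := by
  ext q
  simp only [edgeEvent, diffEvent, Set.mem_preimage, Set.mem_ofPred_eq, Prod.map_fst,
    Prod.map_snd, coord_mem_refCell hD hij, coord_mem_refCell hD hij.symm]
  rfl

lemma measurable_coordMap (y : Fin 3 → ℝ × ℝ) (i j k l : Fin 3) :
    Measurable (Prod.map (coord y i j) (coord y k l)) :=
  (measurable_coord y i j).prodMap (measurable_coord y k l)

lemma unif_coordMap_preimage {y : Fin 3 → ℝ × ℝ} (hD : area2 y ≠ 0) {i j k l : Fin 3}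
    (hij : i ≠ j) (hkl : k ≠ l) {G : Set ((ℝ × ℝ) × (ℝ × ℝ))} (hG : MeasurableSet G) :
    ((unif y).prod (unif y)) (Prod.map (coord y i j) (coord y k l) ⁻¹' G)
      = (refUnif.prod refUnif) G := by
  rw [← Measure.map_apply (measurable_coordMap y i j k l) hG, ← Measure.map_prod_map _ _
    (measurable_coord y i j) (measurable_coord y k l), map_coord_unif hD hij,
    map_coord_unif hD hkl]

lemma measurableSet_edgeEvent {y : Fin 3 → ℝ × ℝ} (hD : area2 y ≠ 0) (r : ℝ) (i j : Fin 3) :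
    MeasurableSet (edgeEvent y r i j) := by
  by_cases hij : i = j
  · subst hij
    obtain ⟨k, hk⟩ := exists_ne i
    rw [edgeEvent_same hD r hk.symm]
    exact measurable_coordMap y _ _ _ _ (measurableSet_sameEvent r)
  · rw [edgeEvent_diff hD r hij]
    exact measurable_coordMap y _ _ _ _ (measurableSet_diffEvent r)

lemma unif_edgeEvent {y : Fin 3 → ℝ × ℝ} (hD : area2 y ≠ 0) {r : ℝ} (hr : 1 ≤ r) (i j : Fin 3) :
    ((unif y).prod (unif y)) (edgeEvent y r i j) = ENNReal.ofReal
      (if i = j then 4 * (highTail r - lowTail r)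
        else 4 * (1 / 36 - 2 * oneFail r + bothFail r)) := by
  by_cases hij : i = j
  · subst hij
    obtain ⟨k, hk⟩ := exists_ne i
    rw [edgeEvent_same hD r hk.symm, unif_coordMap_preimage hD hk.symm hk.symm
      (measurableSet_sameEvent r), refUnif_sameEvent hr, if_pos rfl]
  · rw [edgeEvent_diff hD r hij, unif_coordMap_preimage hD hij (Ne.symm hij)
      (measurableSet_diffEvent r), refUnif_diffEvent, if_neg hij]

lemma cell_unique {y : Fin 3 → ℝ × ℝ} {i j : Fin 3} {x : ℝ × ℝ} (hi : x ∈ cell y i)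
    (hj : x ∈ cell y j) : i = j := by
  by_contra h
  exact lt_asymm (hi.2 j (Ne.symm h)) (hj.2 i h)

lemma edge_ae_eq {y : Fin 3 → ℝ × ℝ} (hD : area2 y ≠ 0) (r : ℝ) :
    {q : (ℝ × ℝ) × (ℝ × ℝ) | q.2 ∈ NPE y r q.1 ∧ q.1 ∈ NPE y r q.2}
      =ᵐ[(unif y).prod (unif y)] ⋃ ij : Fin 3 × Fin 3, edgeEvent y r ij.1 ij.2 := by
  have h1 := Measure.quasiMeasurePreserving_fst (μ := unif y) (ν := unif y) |>.ae (ae_mem_cell hD)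
  have h2 := Measure.quasiMeasurePreserving_snd (μ := unif y) (ν := unif y) |>.ae (ae_mem_cell hD)
  filter_upwards [h1, h2] with q hq1 hq2
  obtain ⟨⟨i, hi⟩, hv1⟩ := hq1
  obtain ⟨⟨j, hj⟩, hv2⟩ := hq2
  rw [eq_iff_iff]
  change (q.2 ∈ NPE y r q.1 ∧ q.1 ∈ NPE y r q.2) ↔
    q ∈ ⋃ ij : Fin 3 × Fin 3, edgeEvent y r ij.1 ij.2
  rw [NPE, NPE, if_neg hv1, if_neg hv2, vtx_of_mem_cell hD hi, vtx_of_mem_cell hD hj,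
    Set.mem_iUnion]
  constructor
  · rintro ⟨h3, h4⟩
    exact ⟨(i, j), hi, hj, h3.2, h4.2⟩
  · rintro ⟨⟨k, l⟩, hk, hl, h3, h4⟩
    obtain rfl := cell_unique hi hk
    obtain rfl := cell_unique hj hl
    exact ⟨⟨hj.1, h3⟩, hi.1, h4⟩

/-- Three of the nine pairs of cells coincide, six are distinct. -/
lemma pand_eq_pandInt {y : Fin 3 → ℝ × ℝ} (hD : area2 y ≠ 0) {r : ℝ} (hr : 1 ≤ r) :
    (((unif y).prod (unif y))
      {q : (ℝ × ℝ) × (ℝ × ℝ) | q.2 ∈ NPE y r q.1 ∧ q.1 ∈ NPE y r q.2}).toReal = pandInt r := by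
  have hA := tails_nonneg hr
  have hB := fails_nonneg r
  have hdisj : Pairwise (Function.onFun Disjoint
      fun ij : Fin 3 × Fin 3 => edgeEvent y r ij.1 ij.2) := by
    intro a b hab
    rw [Function.onFun, Set.disjoint_left]
    intro q ha hb
    exact hab (Prod.ext (cell_unique ha.1 hb.1) (cell_unique ha.2.1 hb.2.1))
  rw [measure_congr (edge_ae_eq hD r), measure_iUnion hdisj
    fun ij => measurableSet_edgeEvent hD r ij.1 ij.2, tsum_fintype]
  simp_rw [unif_edgeEvent hD hr]
  rw [← ENNReal.ofReal_sum_of_nonneg, ENNReal.toReal_ofReal]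
  · rw [Fintype.sum_prod_type]
    simp only [Fin.sum_univ_three, Fin.reduceEq, if_true, if_false, pandInt]
    ring
  · exact Finset.sum_nonneg fun ij _ => by split_ifs <;> linarith
  · exact fun ij _ => by split_ifs <;> linarith

/-- the explicit piecewise formula for the edge probability
`p_and(r) = P(X_2 ∈ N_PE^r(X_1) and X_1 ∈ N_PE^r(X_2))` of the reflexivity graph, for
`X_1, X_2` i.i.d. uniform on a triangle. -/
theorem pand_formula
    (y : Fin 3 → ℝ × ℝ) (hy : ¬ Collinear ℝ ({y 0, y 1, y 2} : Set (ℝ × ℝ)))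
    (r : ℝ) (hr : 1 ≤ r) :
    let pand : ℝ := (((unif y).prod (unif y))
      {q : (ℝ × ℝ) × (ℝ × ℝ) | q.2 ∈ NPE y r q.1 ∧ q.1 ∈ NPE y r q.2}).toReal
    (r < 4 / 3 →
      pand = (1 - r) * (5 * r ^ 5 - 148 * r ^ 4 + 245 * r ^ 3 - 178 * r ^ 2
          - 232 * r + 128) / (54 * r ^ 2 * (r + 2) * (r + 1))) ∧
    (4 / 3 ≤ r → r < 3 / 2 →
      pand = -(101 * r ^ 5 - 801 * r ^ 4 + 1302 * r ^ 3 - 732 * r ^ 2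
          - 536 * r + 672) / (216 * r * (r + 2) * (r + 1))) ∧
    (3 / 2 ≤ r → r < 2 →
      pand = (r ^ 8 - 13 * r ^ 7 + 30 * r ^ 6 + 148 * r ^ 5 - 448 * r ^ 4
          + 264 * r ^ 3 + 288 * r ^ 2 - 368 * r + 96) / (8 * r ^ 4 * (r + 2) * (r + 1))) ∧
    (2 ≤ r →
      pand = (r ^ 3 + 3 * r ^ 2 + 2 * r - 2) * (r - 1) ^ 2 / (r ^ 4 * (r + 1))) := by
  intro pand
  have h : pand = pandInt r := pand_eq_pandInt (area2_ne_zero hy) hr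
  rw [h]
  exact pandInt_formula r hr

end
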